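/- Let a0 ≥ 1, b0 > 0, and let g : ℝ² → ℝ satisfy the (a0,b0)-foliation conditions. Let ψ0 : ℝ → ℝ be a Schwartz function supported in {t : 1/2 ≤ |t| ≤ 5/2} such that Σ_{k∈ℤ} ψ0(2^{−k} t) = 1 for every t ≠ 0, and let φ_k : ℝ → ℂ be the inverse Fourier transform of t ↦ ψ0(2^{−k} t). For every q ∈ (1,∞) there is a constant C depending only on q, a0 and ψ0 such that: for every finitely supported family (f_k)_{k∈ℤ} of measurable functions on ℝ² with ‖(Σ_k |f_k|²)^{1/2}‖_{L^q(ℝ²)} < ∞, setting F_k(x,y) := f_k(g(x,y), y), one has ‖ (x,y) ↦ Σ_{k∈ℤ} (φ_k * F_k(x,·))(y) ‖_{L^q(ℝ²)} ≤ C ‖ (Σ_{k∈ℤ} |f_k|² )^{1/2} ‖_{L^q(ℝ²)}. -/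

import Mathlib

open MeasureTheory
open scoped SchwartzMap FourierTransform

/-- The dyadic interval `[m 2ⁿ, (m+1) 2ⁿ)`. -/
def dyadicIco (n m : ℤ) : Set ℝ := Set.Ico (m * (2 : ℝ) ^ n) ((m + 1) * (2 : ℝ) ^ n)

theorem mem_dyadicIco {n m : ℤ} {x : ℝ} : x ∈ dyadicIco n m ↔ ⌊x / (2 : ℝ) ^ n⌋ = m := by
  have h : (0 : ℝ) < (2 : ℝ) ^ n := by positivity
  rw [Int.floor_eq_iff, le_div_iff₀ h, div_lt_iff₀ h]
  rfl

theorem volume_dyadicIco (n m : ℤ) : volume (dyadicIco n m) = ENNReal.ofReal ((2 : ℝ) ^ n) := by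
  rw [dyadicIco, Real.volume_Ico]
  ring_nf

theorem floor_div_two_zpow {n n' : ℤ} (h : n ≤ n') (x : ℝ) :
    ⌊x / (2 : ℝ) ^ n'⌋ = ⌊x / (2 : ℝ) ^ n⌋ / 2 ^ (n' - n).toNat := by
  rw [← Int.mul_cast_floor_div_cancel_of_pos (n := 2 ^ (n' - n).toNat) (by positivity)]
  congr 2
  push_cast
  rw [← zpow_natCast, Int.toNat_of_nonneg (by omega), zpow_sub₀ two_ne_zero]
  field_simp

theorem dyadicIco_subset {n n' m : ℤ} (h : n ≤ n') {x : ℝ} (hx : x ∈ dyadicIco n m) :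
    dyadicIco n m ⊆ dyadicIco n' ⌊x / (2 : ℝ) ^ n'⌋ := by
  intro y hy
  rw [mem_dyadicIco] at *
  rw [floor_div_two_zpow h, floor_div_two_zpow h, hx, hy]

theorem dyadicIco_eq_Ico_center (n m : ℤ) :
    dyadicIco n m = Set.Ico ((m + 1 / 2) * (2 : ℝ) ^ n - (2 : ℝ) ^ n / 2)
      ((m + 1 / 2) * (2 : ℝ) ^ n + (2 : ℝ) ^ n / 2) := by
  rw [dyadicIco]
  congr 1 <;> ring

section Cover

variable {E : Type*} [NormedAddCommGroup E]

theorem setLIntegral_enorm_le_add {α : Type*} [MeasurableSpace α] {μ : Measure α} {F : α → E}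
    (hF : StronglyMeasurable F) {t : ℝ} (I : Set α) :
    ∫⁻ x in I, ‖F x‖ₑ ∂μ ≤
      ENNReal.ofReal t * μ I + ∫⁻ x in I ∩ {x | t < ‖F x‖}, ‖F x‖ₑ ∂μ := by
  have hH : MeasurableSet {x | t < ‖F x‖} :=
    measurableSet_lt measurable_const hF.norm.measurable
  rw [← lintegral_inter_add_sdiff _ I hH, add_comm]
  gcongr
  calc ∫⁻ x in I \ {x | t < ‖F x‖}, ‖F x‖ₑ ∂μ
      ≤ ∫⁻ _ in I \ {x | t < ‖F x‖}, ENNReal.ofReal t ∂μ := by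
        refine setLIntegral_mono measurable_const fun x hx => ?_
        rw [← ofReal_norm]
        exact ENNReal.ofReal_le_ofReal (not_lt.1 hx.2)
    _ = ENNReal.ofReal t * μ (I \ {x | t < ‖F x‖}) := by simp
    _ ≤ _ := by gcongr; exact Set.sdiff_subset

theorem locallyIntegrable_of_setLIntegral_ne_top {F : ℝ → E}
    (hF : StronglyMeasurable F) {t : ℝ}
    (hfin : ∫⁻ x in {x | t < ‖F x‖}, ‖F x‖ₑ ≠ ⊤) : LocallyIntegrable F := by
  rw [locallyIntegrable_iff]
  intro k hk
  refine ⟨hF.aestronglyMeasurable, ?_⟩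
  rw [HasFiniteIntegral]
  refine (setLIntegral_enorm_le_add hF (t := t) k).trans_lt ?_
  refine ENNReal.add_lt_top.2 ⟨ENNReal.mul_lt_top ENNReal.ofReal_lt_top hk.measure_lt_top, ?_⟩
  exact (lintegral_mono_set Set.inter_subset_right).trans_lt hfin.lt_top

theorem ae_norm_le_of_dyadic_average_le {F : ℝ → E} (hF : LocallyIntegrable F) {t : ℝ}
    (ht : 0 ≤ t) :
    ∀ᵐ x : ℝ, (∀ n : ℤ, ∫⁻ y in dyadicIco n ⌊x / (2 : ℝ) ^ n⌋, ‖F y‖ₑ ≤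
      ENNReal.ofReal t * volume (dyadicIco n ⌊x / (2 : ℝ) ^ n⌋)) → ‖F x‖ ≤ t := by
  filter_upwards [IsUnifLocDoublingMeasure.ae_tendsto_average volume (fun x => (hF x).norm) 1] with x hx h
  have hr : ∀ j : ℕ, (0 : ℝ) < (2 : ℝ) ^ (-(j : ℤ)) / 2 := fun j => by positivity
  have lim := hx (l := Filter.atTop)
    (fun j : ℕ => ((⌊x / (2 : ℝ) ^ (-(j : ℤ))⌋ : ℝ) + 1 / 2) * (2 : ℝ) ^ (-(j : ℤ)))
    (fun j : ℕ => (2 : ℝ) ^ (-(j : ℤ)) / 2) ?_ ?_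
  · refine le_of_tendsto' lim fun j => ?_
    set n : ℤ := -(j : ℤ)
    set m : ℤ := ⌊x / (2 : ℝ) ^ n⌋
    have hae : Metric.closedBall (((m : ℝ) + 1 / 2) * (2 : ℝ) ^ n) ((2 : ℝ) ^ n / 2)
        =ᵐ[volume] dyadicIco n m := by
      rw [Real.closedBall_eq_Icc, dyadicIco_eq_Ico_center]
      exact Ico_ae_eq_Icc.symm
    rw [setAverage_congr hae, setAverage_eq]
    have hInt : IntegrableOn F (dyadicIco n m) := by
      refine (hF.integrableOn_isCompact (isCompact_closedBall _ _)).congr_set_ae hae.symm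
    have h1 := h n
    rw [← ofReal_integral_norm_eq_lintegral_enorm hInt, volume_dyadicIco,
      ← ENNReal.ofReal_mul ht, ENNReal.ofReal_le_ofReal_iff (by positivity)] at h1
    have hv : volume.real (dyadicIco n m) = (2 : ℝ) ^ n := by
      rw [Measure.real, volume_dyadicIco, ENNReal.toReal_ofReal (by positivity)]
    rw [hv, smul_eq_mul, inv_mul_le_iff₀ (by positivity)]
    linarith
  · refine tendsto_nhdsWithin_iff.2 ⟨?_, Filter.Eventually.of_forall hr⟩
    have := (tendsto_pow_atTop_nhds_zero_of_lt_one (r := (1 / 2 : ℝ)) (by norm_num)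
      (by norm_num)).div_const 2
    simpa [zpow_neg] using this
  · refine Filter.Eventually.of_forall fun j => ?_
    have : x ∈ dyadicIco (-(j : ℤ)) ⌊x / (2 : ℝ) ^ (-(j : ℤ))⌋ := mem_dyadicIco.2 rfl
    rw [dyadicIco_eq_Ico_center] at this
    rw [one_mul, Real.closedBall_eq_Icc]
    exact Set.Ico_subset_Icc_self this

/-- Calderón–Zygmund stopping intervals of `F` at height `t`. -/
theorem exists_stopping_intervals {F : ℝ → E} (hF : StronglyMeasurable F) {t : ℝ} (ht : 0 < t)
    (hfin : ∫⁻ x in {x | t / 2 < ‖F x‖}, ‖F x‖ₑ ≠ ⊤) :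
    ∃ (ι : Type) (_ : Countable ι) (c r : ι → ℝ), (∀ i, 0 < r i) ∧
      Pairwise (Function.onFun Disjoint fun i => Set.Ico (c i - r i) (c i + r i)) ∧
      (∀ i, ∫⁻ x in Set.Ico (c i - r i) (c i + r i), ‖F x‖ₑ ≤
        ENNReal.ofReal (2 * t) * volume (Set.Ico (c i - r i) (c i + r i))) ∧
      (∀ i, volume (Set.Ico (c i - r i) (c i + r i)) ≤ ENNReal.ofReal (2 / t) *
        ∫⁻ x in Set.Ico (c i - r i) (c i + r i) ∩ {x | t / 2 < ‖F x‖}, ‖F x‖ₑ) ∧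
      ∀ᵐ x : ℝ, x ∉ ⋃ i, Set.Ico (c i - r i) (c i + r i) → ‖F x‖ ≤ t := by
  set heavy : ℤ → ℤ → Prop := fun n m =>
    ENNReal.ofReal t * volume (dyadicIco n m) < ∫⁻ y in dyadicIco n m, ‖F y‖ₑ with hheavy
  have heavy_le : ∀ n m, heavy n m → volume (dyadicIco n m) ≤ ENNReal.ofReal (2 / t) *
      ∫⁻ x in dyadicIco n m ∩ {x | t / 2 < ‖F x‖}, ‖F x‖ₑ := by
    intro n m h
    have h1 := h.le.trans (setLIntegral_enorm_le_add hF (t := t / 2) (dyadicIco n m))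
    have h2 : ENNReal.ofReal t = ENNReal.ofReal (t / 2) + ENNReal.ofReal (t / 2) := by
      rw [← ENNReal.ofReal_add (by positivity) (by positivity)]
      ring_nf
    have h3 : ENNReal.ofReal (t / 2) * volume (dyadicIco n m) ≠ ⊤ := by
      rw [volume_dyadicIco]
      exact ENNReal.mul_ne_top ENNReal.ofReal_ne_top ENNReal.ofReal_ne_top
    rw [h2, add_mul, ENNReal.add_le_add_iff_left h3] at h1
    calc volume (dyadicIco n m)
        = ENNReal.ofReal (2 / t) * (ENNReal.ofReal (t / 2) * volume (dyadicIco n m)) := by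
          rw [← mul_assoc, ← ENNReal.ofReal_mul (by positivity)]
          rw [show 2 / t * (t / 2) = 1 by field_simp]
          simp
      _ ≤ _ := by gcongr
  have hbdd : ∃ N : ℤ, ∀ n m, heavy n m → n ≤ N := by
    set M := ENNReal.ofReal (2 / t) * ∫⁻ x in {x | t / 2 < ‖F x‖}, ‖F x‖ₑ with hM
    have hMtop : M ≠ ⊤ := ENNReal.mul_ne_top ENNReal.ofReal_ne_top hfin
    obtain ⟨N, hN⟩ := pow_unbounded_of_one_lt M.toReal (one_lt_two : (1 : ℝ) < 2)
    refine ⟨N, fun n m h => ?_⟩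
    by_contra! hn
    have h1 : ENNReal.ofReal ((2 : ℝ) ^ n) ≤ M := by
      rw [← volume_dyadicIco n m]
      exact (heavy_le n m h).trans
        (mul_le_mul' le_rfl (lintegral_mono_set Set.inter_subset_right))
    rw [ENNReal.ofReal_le_iff_le_toReal hMtop] at h1
    have h2 : (2 : ℝ) ^ (N : ℤ) ≤ (2 : ℝ) ^ n := zpow_le_zpow_right₀ one_le_two hn.le
    rw [zpow_natCast] at h2
    linarith
  obtain ⟨N, hN⟩ := hbdd
  set D : Set (ℤ × ℤ) := {p | heavy p.1 p.2 ∧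
    ∀ x ∈ dyadicIco p.1 p.2, ∀ n', p.1 < n' → ¬ heavy n' ⌊x / (2 : ℝ) ^ n'⌋} with hD
  refine ⟨D, inferInstance, fun p => ((p.1.2 : ℝ) + 1 / 2) * (2 : ℝ) ^ p.1.1,
    fun p => (2 : ℝ) ^ p.1.1 / 2, fun p => by positivity, ?_⟩
  simp only [← dyadicIco_eq_Ico_center]
  refine ⟨?_, ?_, fun p => heavy_le _ _ p.2.1, ?_⟩
  · rintro ⟨⟨n, m⟩, hp⟩ ⟨⟨n', m'⟩, hp'⟩ hne
    refine Set.disjoint_left.2 fun x hx hx' => hne ?_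
    have hm := mem_dyadicIco.1 hx
    have hm' := mem_dyadicIco.1 hx'
    simp only at hm hm'
    have hnn : n = n' := by
      rcases lt_trichotomy n n' with h | h | h
      · exact absurd (hm' ▸ hp'.1) (hp.2 x hx n' h)
      · exact h
      · exact absurd (hm ▸ hp.1) (hp'.2 x hx' n h)
    subst hnn
    rw [Subtype.mk.injEq, Prod.mk.injEq]
    exact ⟨rfl, hm.symm.trans hm'⟩
  · rintro ⟨⟨n, m⟩, hp⟩
    have hx : (m * (2 : ℝ) ^ n) ∈ dyadicIco n m := by
      rw [mem_dyadicIco, mul_div_cancel_right₀ _ (by positivity)]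
      exact Int.floor_intCast m
    have h1 := not_lt.1 (hp.2 _ hx (n + 1) (lt_add_one n))
    refine (lintegral_mono_set (dyadicIco_subset (lt_add_one n).le hx)).trans (h1.trans_eq ?_)
    simp only [volume_dyadicIco]
    rw [← ENNReal.ofReal_mul ht.le, ← ENNReal.ofReal_mul (by positivity),
      zpow_add_one₀ two_ne_zero]
    ring_nf
  · filter_upwards [ae_norm_le_of_dyadic_average_le
      (locallyIntegrable_of_setLIntegral_ne_top hF hfin) ht.le] with x hx hxD
    refine hx fun n => not_lt.1 fun hn => hxD ?_
    obtain ⟨n₀, hn₀, hmax⟩ := Int.exists_greatest_of_bdd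
      (P := fun n => heavy n ⌊x / (2 : ℝ) ^ n⌋) ⟨N, fun z hz => hN _ _ hz⟩ ⟨n, hn⟩
    have hxmem : x ∈ dyadicIco n₀ ⌊x / (2 : ℝ) ^ n₀⌋ := mem_dyadicIco.2 rfl
    refine Set.mem_iUnion.2 ⟨⟨(n₀, ⌊x / (2 : ℝ) ^ n₀⌋), hn₀, fun y hy n' hn' hh => ?_⟩, hxmem⟩
    have hy' := mem_dyadicIco.1 (dyadicIco_subset hn'.le hxmem hy)
    rw [hy'] at hh
    exact absurd (hmax n' hh) (not_le.2 hn')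

end Cover

section SingularIntegral

variable {E F : Type*} [NormedAddCommGroup E] [NormedSpace ℂ E]
  [NormedAddCommGroup F] [NormedSpace ℂ F]

/-- Convolution with an operator-valued kernel. -/
noncomputable def kernelConv (K : ℝ → E →L[ℂ] F) (f : ℝ → E) (y : ℝ) : F :=
  ∫ z, K (y - z) (f z)

theorem stronglyMeasurable_kernelConv_integrand {K : ℝ → E →L[ℂ] F} (hK : Continuous K)
    {f : ℝ → E} (hf : StronglyMeasurable f) :
    StronglyMeasurable fun p : ℝ × ℝ => K (p.1 - p.2) (f p.2) :=
  isBoundedBilinearMap_apply.continuous.comp_stronglyMeasurable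
    ((hK.comp (continuous_fst.sub continuous_snd)).stronglyMeasurable.prodMk
      (hf.comp_measurable measurable_snd))

theorem stronglyMeasurable_kernelConv {K : ℝ → E →L[ℂ] F} (hK : Continuous K)
    {f : ℝ → E} (hf : StronglyMeasurable f) : StronglyMeasurable (kernelConv K f) :=
  (stronglyMeasurable_kernelConv_integrand hK hf).integral_prod_right

theorem integrable_kernel_apply_of_bounded_kernel {K : ℝ → E →L[ℂ] F} (hK : Continuous K)
    {C : ℝ} (hKC : ∀ y, ‖K y‖ ≤ C) {f : ℝ → E} (hf : StronglyMeasurable f)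
    {μ : Measure ℝ} (hfi : Integrable f μ) (y : ℝ) : Integrable (fun z => K (y - z) (f z)) μ := by
  refine Integrable.mono' (hfi.norm.const_mul C)
    ((stronglyMeasurable_kernelConv_integrand hK hf).comp_measurable
      (measurable_const.prodMk measurable_id : Measurable fun z : ℝ => (y, z))).aestronglyMeasurable
    (Filter.Eventually.of_forall fun z => ?_)
  exact ((K (y - z)).le_opNorm (f z)).trans
    (mul_le_mul_of_nonneg_right (hKC _) (norm_nonneg _))

theorem integrable_kernel_apply_of_bounded {K : ℝ → E →L[ℂ] F} (hK : Continuous K)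
    (hKi : Integrable K) {f : ℝ → E} (hf : StronglyMeasurable f) {C : ℝ}
    (hfC : ∀ᵐ z, ‖f z‖ ≤ C) (y : ℝ) : Integrable (fun z => K (y - z) (f z)) := by
  refine Integrable.mono' ((hKi.comp_sub_left y).norm.mul_const C)
    ((stronglyMeasurable_kernelConv_integrand hK hf).comp_measurable
      (measurable_const.prodMk measurable_id : Measurable fun z : ℝ => (y, z))).aestronglyMeasurable
    ?_
  filter_upwards [hfC] with z hz
  exact ((K (y - z)).le_opNorm (f z)).trans (mul_le_mul_of_nonneg_left hz (norm_nonneg _))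

variable [CompleteSpace E] [CompleteSpace F]

/-- The Hörmander condition controls the image of a mean-zero function away from its support. -/
theorem lintegral_kernelConv_mean_zero_le {K : ℝ → E →L[ℂ] F} (hK : Continuous K)
    {C : ℝ} (hKC : ∀ y, ‖K y‖ ≤ C) {B : ENNReal}
    (hB : ∀ s : ℝ, ∫⁻ y in {y : ℝ | 2 * |s| ≤ |y|}, ‖K (y - s) - K y‖ₑ ≤ B)
    {b : ℝ → E} (hb : StronglyMeasurable b) {c r : ℝ}
    (hbi : IntegrableOn b (Set.Ico (c - r) (c + r)))
    (hb0 : ∫ z in Set.Ico (c - r) (c + r), b z = 0) :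
    ∫⁻ y in {y : ℝ | 2 * r ≤ |y - c|}, ‖∫ z in Set.Ico (c - r) (c + r), K (y - z) (b z)‖ₑ ≤
      B * ∫⁻ z in Set.Ico (c - r) (c + r), ‖b z‖ₑ := by
  set I := Set.Ico (c - r) (c + r) with hI
  set S := {y : ℝ | 2 * r ≤ |y - c|} with hS
  have hKm : Measurable fun p : ℝ × ℝ => ‖K (p.1 - p.2) - K (p.1 - c)‖ₑ * ‖b p.2‖ₑ := by
    refine Measurable.mul ?_ (hb.enorm.comp measurable_snd)
    exact (Continuous.enorm (by fun_prop)).measurable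
  calc ∫⁻ y in S, ‖∫ z in I, K (y - z) (b z)‖ₑ
      ≤ ∫⁻ y in S, ∫⁻ z in I, ‖K (y - z) - K (y - c)‖ₑ * ‖b z‖ₑ := by
        refine lintegral_mono fun y => ?_
        have h1 : ∫ z in I, K (y - z) (b z) = ∫ z in I, (K (y - z) - K (y - c)) (b z) := by
          simp only [sub_apply]
          rw [integral_sub (integrable_kernel_apply_of_bounded_kernel hK hKC hb hbi y)
            ((K (y - c)).integrable_comp hbi), ContinuousLinearMap.integral_comp_comm _ hbi, hb0]
          simp
        rw [h1]
        refine (enorm_integral_le_lintegral_enorm _).trans (lintegral_mono fun z => ?_)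
        exact ContinuousLinearMap.le_opENorm _ _
    _ = ∫⁻ z in I, ∫⁻ y in S, ‖K (y - z) - K (y - c)‖ₑ * ‖b z‖ₑ :=
        lintegral_lintegral_swap hKm.aemeasurable
    _ ≤ ∫⁻ z in I, B * ‖b z‖ₑ := by
        refine setLIntegral_mono (hb.enorm.const_mul _) fun z hz => ?_
        rw [lintegral_mul_const _ (Continuous.enorm (by fun_prop)).measurable]
        gcongr
        refine le_trans ?_ (hB (z - c))
        have hz' : |z - c| ≤ r := abs_le.2 ⟨by linarith [hz.1], by linarith [hz.2]⟩
        have hmp := (measurePreserving_sub_right volume c).setLIntegral_comp_preimage_emb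
          (MeasurableEquiv.subRight c).measurableEmbedding
          (fun y => ‖K (y - (z - c)) - K y‖ₑ) {y : ℝ | 2 * |z - c| ≤ |y|}
        rw [← hmp]
        refine (lintegral_mono_set ?_).trans_eq (lintegral_congr fun y => ?_)
        · intro y hy
          simp only [hS, Set.mem_ofPred_eq, Set.mem_preimage] at hy ⊢
          linarith
        · simp
    _ = B * ∫⁻ z in I, ‖b z‖ₑ := lintegral_const_mul _ hb.enorm

end SingularIntegral

section LevelSets

variable {E F : Type*} [NormedAddCommGroup E] [NormedSpace ℂ E] [CompleteSpace E]
  [MeasurableSpace E] [BorelSpace E] [SecondCountableTopology E]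
  [NormedAddCommGroup F] [NormedSpace ℂ F] [CompleteSpace F]

/-- Calderón–Zygmund decomposition `f = g + (f - g)` at height `t`. -/
theorem exists_calderonZygmund_good_part {f : ℝ → E} (hf : StronglyMeasurable f) {t : ℝ}
    (ht : 0 < t) (hfin : ∫⁻ x in {x | t / 2 < ‖f x‖}, ‖f x‖ₑ ≠ ⊤) :
    ∃ (ι : Type) (_ : Countable ι) (c r : ι → ℝ) (g : ℝ → E), StronglyMeasurable g ∧
      (∀ i, 0 < r i) ∧
      Pairwise (Function.onFun Disjoint fun i => Set.Ico (c i - r i) (c i + r i)) ∧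
      volume (⋃ i, Set.Ico (c i - r i) (c i + r i)) ≤
        ENNReal.ofReal (2 / t) * ∫⁻ x in {x | t / 2 < ‖f x‖}, ‖f x‖ₑ ∧
      (∀ i, ∫⁻ x in Set.Ico (c i - r i) (c i + r i), ‖f x - g x‖ₑ ≤
        ENNReal.ofReal (4 * t) * volume (Set.Ico (c i - r i) (c i + r i))) ∧
      (∀ i, ∫ x in Set.Ico (c i - r i) (c i + r i), (f x - g x) = 0) ∧
      (∀ x, x ∉ ⋃ i, Set.Ico (c i - r i) (c i + r i) → g x = f x) ∧
      (∀ x ∈ ⋃ i, Set.Ico (c i - r i) (c i + r i), ‖g x‖ ≤ 2 * t) ∧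
      (∀ᵐ x : ℝ, x ∉ ⋃ i, Set.Ico (c i - r i) (c i + r i) → ‖f x‖ ≤ t) := by
  obtain ⟨ι, hι, c, r, hr, hdisj, hup, hlow, hae⟩ := exists_stopping_intervals hf ht hfin
  set I : ι → Set ℝ := fun i => Set.Ico (c i - r i) (c i + r i) with hI
  have hIm : ∀ i, MeasurableSet (I i) := fun i => measurableSet_Ico
  have hHm : MeasurableSet {x | t / 2 < ‖f x‖} :=
    measurableSet_lt measurable_const hf.norm.measurable
  have hIfin : ∀ i, volume (I i) ≠ ⊤ := fun i => by simp [hI]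
  have hIpos : ∀ i, volume (I i) ≠ 0 := fun i => by
    simp only [hI, Real.volume_Ico, ne_eq, ENNReal.ofReal_eq_zero, not_le]
    linarith [hr i]
  have hloc := locallyIntegrable_of_setLIntegral_ne_top hf hfin
  have hfI : ∀ i, IntegrableOn f (I i) := fun i =>
    (hloc.integrableOn_isCompact isCompact_Icc).mono_set Set.Ico_subset_Icc_self
  have havg : ∀ i, ‖⨍ x in I i, f x‖ ≤ 2 * t := by
    intro i
    have hpos : 0 < volume.real (I i) := ENNReal.toReal_pos (hIpos i) (hIfin i)
    rw [setAverage_eq, norm_smul, norm_inv, Real.norm_of_nonneg measureReal_nonneg,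
      inv_mul_le_iff₀ hpos]
    refine (norm_integral_le_integral_norm _).trans ?_
    have h := hup i
    rw [← ofReal_integral_norm_eq_lintegral_enorm (hfI i)] at h
    rw [← ENNReal.ofReal_toReal (hIfin i), ← ENNReal.ofReal_mul (by positivity),
      ENNReal.ofReal_le_ofReal_iff (by positivity)] at h
    rw [mul_comm]
    exact h
  obtain ⟨g, hgm, hg⟩ := exists_measurable_piecewise
    (fun o : Option ι => o.elim (⋃ i, I i)ᶜ I)
    (fun o => by
      cases o with
      | none => exact (MeasurableSet.iUnion hIm).compl
      | some i => exact hIm i)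
    (fun o : Option ι => o.elim f (fun i _ => ⨍ x in I i, f x))
    (fun o => by
      cases o with
      | none => exact hf.measurable
      | some i => exact measurable_const)
    (by
      intro o o' hne x hx
      cases o with
      | none =>
        cases o' with
        | none => exact absurd rfl hne
        | some j => exact absurd (Set.mem_iUnion_of_mem j hx.2) hx.1
      | some i =>
        cases o' with
        | none => exact absurd (Set.mem_iUnion_of_mem i hx.1) hx.2
        | some j =>
          have hij : i ≠ j := fun h => hne (congrArg some h)
          exact absurd hx.2 (Set.disjoint_left.1 (hdisj hij) hx.1))
  have hgI : ∀ i, ∀ x ∈ I i, g x = ⨍ x in I i, f x := fun i x hx => hg (some i) hx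
  have hgO : ∀ x, x ∉ ⋃ i, I i → g x = f x := fun x hx => hg none hx
  refine ⟨ι, hι, c, r, g, hgm.stronglyMeasurable, hr, hdisj, ?_, fun i => ?_, fun i => ?_, hgO,
    fun x hx => ?_, hae⟩
  · calc volume (⋃ i, I i) = ∑' i, volume (I i) := measure_iUnion hdisj hIm
      _ ≤ ∑' i, ENNReal.ofReal (2 / t) * ∫⁻ x in I i ∩ {x | t / 2 < ‖f x‖}, ‖f x‖ₑ :=
        ENNReal.tsum_le_tsum hlow
      _ = ENNReal.ofReal (2 / t) * ∫⁻ x in ⋃ i, I i ∩ {x | t / 2 < ‖f x‖}, ‖f x‖ₑ := by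
        rw [ENNReal.tsum_mul_left, lintegral_iUnion (fun i => (hIm i).inter hHm)]
        intro i j hij
        exact (hdisj hij).mono Set.inter_subset_left Set.inter_subset_left
      _ ≤ _ := mul_le_mul' le_rfl
        (lintegral_mono_set (Set.iUnion_subset fun i => Set.inter_subset_right))
  · calc ∫⁻ x in I i, ‖f x - g x‖ₑ
        ≤ ∫⁻ x in I i, (‖f x‖ₑ + ENNReal.ofReal (2 * t)) := by
          refine setLIntegral_mono (hf.enorm.add_const _) fun x hx => ?_
          refine enorm_sub_le.trans ?_
          gcongr
          rw [hgI i x hx, ← ofReal_norm]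
          exact ENNReal.ofReal_le_ofReal (havg i)
      _ = (∫⁻ x in I i, ‖f x‖ₑ) + ENNReal.ofReal (2 * t) * volume (I i) := by
          rw [lintegral_add_right _ measurable_const]
          simp
      _ ≤ ENNReal.ofReal (2 * t) * volume (I i) + ENNReal.ofReal (2 * t) * volume (I i) := by
          gcongr
          exact hup i
      _ = ENNReal.ofReal (4 * t) * volume (I i) := by
          rw [← add_mul, ← ENNReal.ofReal_add (by positivity) (by positivity)]
          ring_nf
  · have : IsFiniteMeasure (volume.restrict (I i)) :=
      ⟨by simpa using (hIfin i).lt_top⟩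
    rw [← integral_sub_average (volume.restrict (I i)) f]
    exact setIntegral_congr_fun (hIm i) fun x hx => by simp only [hgI i x hx]
  · obtain ⟨i, hi⟩ := Set.mem_iUnion.1 hx
    rw [hgI i x hi]
    exact havg i

/-- The Calderón–Zygmund estimate for the level sets of a singular integral. -/
theorem volume_kernelConv_gt_le {K : ℝ → E →L[ℂ] F} (hK : Continuous K) (hKi : Integrable K)
    {C : ℝ} (hKC : ∀ y, ‖K y‖ ≤ C) {A B : ENNReal}
    (hA : ∀ g : ℝ → E, StronglyMeasurable g →
      ∫⁻ y, ‖kernelConv K g y‖ₑ ^ (2 : ℝ) ≤ A * ∫⁻ y, ‖g y‖ₑ ^ (2 : ℝ))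
    (hB : ∀ s : ℝ, ∫⁻ y in {y : ℝ | 2 * |s| ≤ |y|}, ‖K (y - s) - K y‖ₑ ≤ B)
    {f : ℝ → E} (hf : StronglyMeasurable f) {t : ℝ}
    (ht : 0 < t) (hfin : ∫⁻ x in {x | t / 2 < ‖f x‖}, ‖f x‖ₑ ≠ ⊤) :
    volume {y | 2 * t < ‖kernelConv K f y‖} ≤
      (4 * A + 4 * B + 2) *
        (ENNReal.ofReal (2 / t) * ∫⁻ x in {x | t / 2 < ‖f x‖}, ‖f x‖ₑ) +
      A * (ENNReal.ofReal (t ^ (-2 : ℝ)) * ∫⁻ x in {x | ‖f x‖ ≤ t}, ‖f x‖ₑ ^ (2 : ℝ)) := by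
  obtain ⟨ι, hι, c, r, g, hg, hr, hdisj, hV, hbad, hmean, hgO, hgI, hae⟩ :=
    exists_calderonZygmund_good_part hf ht hfin
  set I : ι → Set ℝ := fun i => Set.Ico (c i - r i) (c i + r i) with hI
  have hIm : ∀ i, MeasurableSet (I i) := fun i => measurableSet_Ico
  set Ω := ⋃ i, I i with hΩ
  have hΩm : MeasurableSet Ω := MeasurableSet.iUnion hIm
  have hVsum : ∑' i, volume (I i) = volume Ω := (measure_iUnion hdisj hIm).symm
  have hVfin : volume Ω ≠ ⊤ :=
    ne_top_of_le_ne_top (ENNReal.mul_ne_top ENNReal.ofReal_ne_top hfin) hV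
  have hgC : ∀ᵐ z, ‖g z‖ ≤ 2 * t := by
    filter_upwards [hae] with z hz
    by_cases h : z ∈ Ω
    · exact hgI z h
    · rw [hgO z h]
      linarith [hz h]
  set b : ℝ → E := fun z => f z - g z with hb
  have hbm : StronglyMeasurable b := hf.sub hg
  have hb0 : ∀ z, z ∉ Ω → b z = 0 := fun z hz => by simp [hb, hgO z hz]
  have hbΩ : IntegrableOn b Ω := by
    refine ⟨hbm.aestronglyMeasurable, ?_⟩
    rw [HasFiniteIntegral, hΩ, lintegral_iUnion hIm hdisj]
    refine (ENNReal.tsum_le_tsum hbad).trans_lt ?_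
    rw [ENNReal.tsum_mul_left, hVsum]
    exact ENNReal.mul_lt_top ENNReal.ofReal_lt_top hVfin.lt_top
  have hbi : Integrable b :=
    (integrableOn_iff_integrable_of_support_subset fun z hz => by
      by_contra h
      exact hz (hb0 z h)).1 hbΩ
  have hsplit : ∀ y, kernelConv K f y = kernelConv K g y + kernelConv K b y := by
    intro y
    rw [kernelConv, kernelConv, kernelConv,
      ← integral_add (integrable_kernel_apply_of_bounded hK hKi hg hgC y)
        (integrable_kernel_apply_of_bounded_kernel hK hKC hbm hbi y)]
    refine integral_congr_ae (Filter.Eventually.of_forall fun z => ?_)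
    simp [hb]
  -- the exceptional set
  set N : Set ℝ := ⋃ i, {y : ℝ | 2 * r i ≤ |y - c i|}ᶜ with hN
  have hNi : ∀ i, volume ({y : ℝ | 2 * r i ≤ |y - c i|}ᶜ) = 2 * volume (I i) := by
    intro i
    have : {y : ℝ | 2 * r i ≤ |y - c i|}ᶜ = Metric.ball (c i) (2 * r i) := by
      ext y
      simp [Real.dist_eq]
    rw [this, Real.volume_ball, Real.volume_Ico,
      ← ENNReal.ofReal_ofNat, ← ENNReal.ofReal_mul (by norm_num)]
    ring_nf
  have hNvol : volume N ≤ 2 * volume Ω := by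
    refine (measure_iUnion_le _).trans ?_
    simp only [hNi, ENNReal.tsum_mul_left, hVsum, le_refl]
  have hNm : MeasurableSet N := MeasurableSet.iUnion fun i =>
    (measurableSet_le measurable_const (by fun_prop)).compl
  -- the bad part
  have hbadint : ∫⁻ y in Nᶜ, ‖kernelConv K b y‖ₑ ≤ B * (ENNReal.ofReal (4 * t) * volume Ω) := by
    calc ∫⁻ y in Nᶜ, ‖kernelConv K b y‖ₑ
        ≤ ∫⁻ y in Nᶜ, ∑' i, ‖∫ z in I i, K (y - z) (b z)‖ₑ := by
          refine lintegral_mono fun y => ?_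
          have h1 : kernelConv K b y = ∫ z in Ω, K (y - z) (b z) := by
            refine (setIntegral_eq_integral_of_forall_compl_eq_zero fun z hz => ?_).symm
            rw [hb0 z hz, map_zero]
          rw [h1, ← (hasSum_integral_iUnion hIm hdisj
            (integrable_kernel_apply_of_bounded_kernel hK hKC hbm hbΩ y)).tsum_eq]
          exact enorm_tsum_le_tsum_enorm
      _ = ∑' i, ∫⁻ y in Nᶜ, ‖∫ z in I i, K (y - z) (b z)‖ₑ := by
          refine lintegral_tsum fun i => ?_
          exact (stronglyMeasurable_kernelConv_integrand hK hbm).integral_prod_right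
            |>.enorm.aemeasurable
      _ ≤ ∑' i, B * (ENNReal.ofReal (4 * t) * volume (I i)) := by
          refine ENNReal.tsum_le_tsum fun i => ?_
          refine (lintegral_mono_set ?_).trans
            ((lintegral_kernelConv_mean_zero_le hK hKC hB hbm hbi.integrableOn (hmean i)).trans
              (mul_le_mul' le_rfl (hbad i)))
          rw [Set.compl_subset_comm]
          exact Set.subset_iUnion (fun i => {y : ℝ | 2 * r i ≤ |y - c i|}ᶜ) i
      _ = B * (ENNReal.ofReal (4 * t) * volume Ω) := by
          rw [ENNReal.tsum_mul_left, ENNReal.tsum_mul_left, hVsum]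
  have htpos : ENNReal.ofReal t ≠ 0 := by simpa using ht
  have hbadvol : volume ({y | ENNReal.ofReal t ≤ ‖kernelConv K b y‖ₑ} ∩ Nᶜ) ≤
      4 * B * volume Ω := by
    have h := mul_meas_ge_le_lintegral₀ (μ := volume.restrict Nᶜ)
      (stronglyMeasurable_kernelConv hK hbm).enorm.aemeasurable (ENNReal.ofReal t)
    rw [Measure.restrict_apply (measurableSet_le measurable_const
      (stronglyMeasurable_kernelConv hK hbm).enorm)] at h
    have h' := h.trans hbadint
    rw [ENNReal.ofReal_mul (by norm_num), ENNReal.ofReal_ofNat,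
      show B * (4 * ENNReal.ofReal t * volume Ω) = ENNReal.ofReal t * (4 * B * volume Ω) by ring]
      at h'
    exact (ENNReal.mul_le_mul_iff_right htpos ENNReal.ofReal_ne_top).1 h'
  -- the good part
  have hgint : ∫⁻ y, ‖g y‖ₑ ^ (2 : ℝ) ≤ ENNReal.ofReal t ^ (2 : ℝ) * (4 * volume Ω) +
      ∫⁻ x in {x | ‖f x‖ ≤ t}, ‖f x‖ₑ ^ (2 : ℝ) := by
    rw [← lintegral_add_compl _ hΩm]
    gcongr ?_ + ?_
    · calc ∫⁻ y in Ω, ‖g y‖ₑ ^ (2 : ℝ) ≤ ∫⁻ y in Ω, ENNReal.ofReal (2 * t) ^ (2 : ℝ) := by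
            refine setLIntegral_mono measurable_const fun y hy => ?_
            gcongr
            rw [← ofReal_norm]
            exact ENNReal.ofReal_le_ofReal (hgI y hy)
        _ = _ := by
            rw [setLIntegral_const, ENNReal.ofReal_mul (by norm_num),
              ENNReal.mul_rpow_of_nonneg _ _ (by norm_num)]
            norm_num
            ring
    · calc ∫⁻ y in Ωᶜ, ‖g y‖ₑ ^ (2 : ℝ) = ∫⁻ y in Ωᶜ, ‖f y‖ₑ ^ (2 : ℝ) :=
            setLIntegral_congr_fun hΩm.compl fun y hy => by simp only [hgO y hy]
        _ ≤ _ := lintegral_mono_set' hae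
  have hgoodvol : volume {y | ENNReal.ofReal t ≤ ‖kernelConv K g y‖ₑ} ≤
      A * (4 * volume Ω +
        ENNReal.ofReal (t ^ (-2 : ℝ)) * ∫⁻ x in {x | ‖f x‖ ≤ t}, ‖f x‖ₑ ^ (2 : ℝ)) := by
    have h := mul_meas_ge_le_lintegral₀ (μ := volume)
      ((stronglyMeasurable_kernelConv hK hg).enorm.pow_const (2 : ℝ)).aemeasurable
      (ENNReal.ofReal t ^ (2 : ℝ))
    have hset : {y | ENNReal.ofReal t ≤ ‖kernelConv K g y‖ₑ} =
        {y | ENNReal.ofReal t ^ (2 : ℝ) ≤ ‖kernelConv K g y‖ₑ ^ (2 : ℝ)} := by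
      ext y
      simp only [Set.mem_ofPred_eq]
      rw [ENNReal.rpow_le_rpow_iff (by norm_num)]
    rw [← hset] at h
    have h' := h.trans ((hA g hg).trans (mul_le_mul' le_rfl hgint))
    have hinv : ENNReal.ofReal t ^ (2 : ℝ) * ENNReal.ofReal (t ^ (-2 : ℝ)) = 1 := by
      rw [ENNReal.ofReal_rpow_of_pos ht, ← ENNReal.ofReal_mul (by positivity),
        ← Real.rpow_add ht]
      norm_num
    have hne : ENNReal.ofReal t ^ (2 : ℝ) ≠ 0 := by
      simp [ht]
    have hne' : ENNReal.ofReal t ^ (2 : ℝ) ≠ ⊤ :=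
      ENNReal.rpow_ne_top_of_nonneg (by norm_num) ENNReal.ofReal_ne_top
    refine (ENNReal.mul_le_mul_iff_right hne hne').1 (h'.trans_eq ?_)
    rw [show ∀ T V W G : ENNReal, T * (A * (V + W * G)) = A * (T * V + T * W * G) by
      intros; ring, hinv, one_mul]
  have hincl : {y | 2 * t < ‖kernelConv K f y‖} ⊆
      {y | ENNReal.ofReal t ≤ ‖kernelConv K g y‖ₑ} ∪
        (N ∪ ({y | ENNReal.ofReal t ≤ ‖kernelConv K b y‖ₑ} ∩ Nᶜ)) := by
    intro y hy
    simp only [Set.mem_ofPred_eq] at hy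
    by_cases h1 : t ≤ ‖kernelConv K g y‖
    · left
      rw [Set.mem_ofPred_eq, ← ofReal_norm]
      exact ENNReal.ofReal_le_ofReal h1
    · right
      by_cases h2 : y ∈ N
      · exact Or.inl h2
      · refine Or.inr ⟨?_, h2⟩
        rw [Set.mem_ofPred_eq, ← ofReal_norm]
        refine ENNReal.ofReal_le_ofReal ?_
        rw [hsplit] at hy
        have := norm_add_le (kernelConv K g y) (kernelConv K b y)
        linarith
  calc volume {y | 2 * t < ‖kernelConv K f y‖}
      ≤ volume {y | ENNReal.ofReal t ≤ ‖kernelConv K g y‖ₑ} +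
        (volume N + volume ({y | ENNReal.ofReal t ≤ ‖kernelConv K b y‖ₑ} ∩ Nᶜ)) :=
        (measure_mono hincl).trans ((measure_union_le _ _).trans
          (add_le_add le_rfl (measure_union_le _ _)))
    _ ≤ A * (4 * volume Ω +
          ENNReal.ofReal (t ^ (-2 : ℝ)) * ∫⁻ x in {x | ‖f x‖ ≤ t}, ‖f x‖ₑ ^ (2 : ℝ)) +
        (2 * volume Ω + 4 * B * volume Ω) := by gcongr
    _ = (4 * A + 4 * B + 2) * volume Ω +
        A * (ENNReal.ofReal (t ^ (-2 : ℝ)) * ∫⁻ x in {x | ‖f x‖ ≤ t}, ‖f x‖ₑ ^ (2 : ℝ)) := by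
        ring
    _ ≤ _ := by gcongr

end LevelSets

section Interpolation

theorem setLIntegral_mul_setLIntegral_swap {α β : Type*} [MeasurableSpace α] [MeasurableSpace β]
    {μ : Measure α} {ν : Measure β} [SFinite μ] [SFinite ν] {R : Set (α × β)}
    (hR : MeasurableSet R) {T : Set α} {c : α → ENNReal} {w : β → ENNReal}
    (hc : Measurable c) (hw : Measurable w) :
    ∫⁻ t in T, c t * ∫⁻ x in {x | (t, x) ∈ R}, w x ∂ν ∂μ =
      ∫⁻ x, w x * ∫⁻ t in T, {t | (t, x) ∈ R}.indicator c t ∂μ ∂ν := by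
  have h1 : ∀ t, c t * ∫⁻ x in {x | (t, x) ∈ R}, w x ∂ν =
      ∫⁻ x, R.indicator (fun p => c p.1 * w p.2) (t, x) ∂ν := by
    intro t
    have hm : MeasurableSet {x | (t, x) ∈ R} := measurable_prodMk_left hR
    rw [← lintegral_indicator hm, ← lintegral_const_mul _ (hw.indicator hm)]
    refine lintegral_congr fun x => ?_
    by_cases h : (t, x) ∈ R <;> simp [Set.indicator, h]
  have h2 : ∀ x, w x * ∫⁻ t in T, {t | (t, x) ∈ R}.indicator c t ∂μ =
      ∫⁻ t in T, R.indicator (fun p => c p.1 * w p.2) (t, x) ∂μ := by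
    intro x
    have hm : MeasurableSet {t | (t, x) ∈ R} := measurable_prodMk_right hR
    rw [← lintegral_const_mul _ (hc.indicator hm)]
    refine lintegral_congr fun t => ?_
    by_cases h : (t, x) ∈ R <;> simp [Set.indicator, h, mul_comm]
  simp only [h1, h2]
  refine lintegral_lintegral_swap (Measurable.aemeasurable ?_)
  exact Measurable.indicator (by fun_prop) hR

theorem setLIntegral_Ioc_rpow {s a : ℝ} (hs : -1 < s) (ha : 0 ≤ a) :
    ∫⁻ t in Set.Ioc 0 a, ENNReal.ofReal (t ^ s) = ENNReal.ofReal (a ^ (s + 1) / (s + 1)) := by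
  rw [← ofReal_integral_eq_lintegral_ofReal]
  · rw [← intervalIntegral.integral_of_le ha, integral_rpow (Or.inl hs),
      Real.zero_rpow (by linarith), sub_zero]
  · rw [← IntegrableOn, ← intervalIntegrable_iff_integrableOn_Ioc_of_le ha]
    exact intervalIntegral.intervalIntegrable_rpow' hs
  · exact (ae_restrict_iff' measurableSet_Ioc).2
      (Filter.Eventually.of_forall fun t ht => Real.rpow_nonneg ht.1.le _)

theorem setLIntegral_Ioi_rpow {s a : ℝ} (hs : s < -1) (ha : 0 < a) :
    ∫⁻ t in Set.Ioi a, ENNReal.ofReal (t ^ s) = ENNReal.ofReal (-a ^ (s + 1) / (s + 1)) := by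
  rw [← ofReal_integral_eq_lintegral_ofReal]
  · rw [integral_Ioi_rpow_of_lt hs ha]
  · exact integrableOn_Ioi_rpow_of_lt hs ha
  · exact (ae_restrict_iff' measurableSet_Ioi).2
      (Filter.Eventually.of_forall fun t ht => Real.rpow_nonneg (ha.trans ht).le _)

variable {E F : Type*} [NormedAddCommGroup E]

theorem lintegral_high_part_le {f : ℝ → E} (hf : StronglyMeasurable f) {p : ℝ} (hp : 1 < p) :
    ∫⁻ t in Set.Ioi (0 : ℝ), ENNReal.ofReal (t ^ (p - 2)) *
        ∫⁻ x in {x | t / 2 < ‖f x‖}, ‖f x‖ₑ ≤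
      ENNReal.ofReal (2 ^ (p - 1) / (p - 1)) * ∫⁻ x, ‖f x‖ₑ ^ p := by
  have hR : MeasurableSet {q : ℝ × ℝ | q.1 / 2 < ‖f q.2‖} :=
    measurableSet_lt (by fun_prop) (hf.norm.measurable.comp measurable_snd)
  refine (setLIntegral_mul_setLIntegral_swap (μ := volume) (ν := volume) hR
    (c := fun t => ENNReal.ofReal (t ^ (p - 2))) (by fun_prop) hf.enorm).trans_le ?_
  rw [← lintegral_const_mul _ (hf.enorm.pow_const p)]
  refine lintegral_mono fun x => ?_
  have h1 : ∫⁻ t in Set.Ioi (0 : ℝ), {t | (t, x) ∈ {q : ℝ × ℝ | q.1 / 2 < ‖f q.2‖}}.indicator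
      (fun t => ENNReal.ofReal (t ^ (p - 2))) t ≤
      ENNReal.ofReal ((2 * ‖f x‖) ^ (p - 1) / (p - 1)) := by
    have := setLIntegral_Ioc_rpow (s := p - 2) (a := 2 * ‖f x‖) (by linarith) (by positivity)
    rw [show p - 2 + 1 = p - 1 by ring] at this
    rw [← this, ← lintegral_indicator measurableSet_Ioi, ← lintegral_indicator measurableSet_Ioc]
    refine lintegral_mono fun t => ?_
    simp only [Set.indicator, Set.mem_Ioi, Set.mem_ofPred_eq, Set.mem_Ioc]
    split_ifs with h1 h2 h3 <;> first | exact le_rfl | exact zero_le | skip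
    exact absurd ⟨h1, by linarith⟩ h3
  refine (mul_le_mul' le_rfl h1).trans_eq ?_
  simp only [← ofReal_norm]
  rw [ENNReal.ofReal_rpow_of_nonneg (norm_nonneg _) (by linarith),
    ← ENNReal.ofReal_mul (norm_nonneg _),
    ← ENNReal.ofReal_mul (div_nonneg (by positivity) (by linarith)),
    Real.mul_rpow (by norm_num) (norm_nonneg _)]
  congr 1
  have h3 : ‖f x‖ ^ p = ‖f x‖ * ‖f x‖ ^ (p - 1) := by
    rcases (norm_nonneg (f x)).eq_or_lt' with h | h
    · rw [h, Real.zero_rpow (by linarith), zero_mul]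
    · rw [← Real.rpow_one_add' h.le (by linarith)]
      ring_nf
  rw [h3]
  ring

theorem lintegral_low_part_le {f : ℝ → E} (hf : StronglyMeasurable f) {p : ℝ} (hp : 0 < p)
    (hp2 : p < 2) :
    ∫⁻ t in Set.Ioi (0 : ℝ), ENNReal.ofReal (t ^ (p - 3)) *
        ∫⁻ x in {x | ‖f x‖ ≤ t}, ‖f x‖ₑ ^ (2 : ℝ) ≤
      ENNReal.ofReal (1 / (2 - p)) * ∫⁻ x, ‖f x‖ₑ ^ p := by
  have hR : MeasurableSet {q : ℝ × ℝ | ‖f q.2‖ ≤ q.1} :=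
    measurableSet_le (hf.norm.measurable.comp measurable_snd) (by fun_prop)
  refine (setLIntegral_mul_setLIntegral_swap (μ := volume) (ν := volume) hR
    (c := fun t => ENNReal.ofReal (t ^ (p - 3))) (by fun_prop)
    (hf.enorm.pow_const (2 : ℝ))).trans_le ?_
  rw [← lintegral_const_mul _ (hf.enorm.pow_const p)]
  refine lintegral_mono fun x => ?_
  rcases (norm_nonneg (f x)).eq_or_lt' with h0 | h0
  · have : ‖f x‖ₑ = 0 := by rw [← ofReal_norm, h0, ENNReal.ofReal_zero]
    simp [this]
  have h1 : ∫⁻ t in Set.Ioi (0 : ℝ), {t | (t, x) ∈ {q : ℝ × ℝ | ‖f q.2‖ ≤ q.1}}.indicator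
      (fun t => ENNReal.ofReal (t ^ (p - 3))) t ≤
      ENNReal.ofReal (‖f x‖ ^ (p - 2) / (2 - p)) := by
    have := setLIntegral_Ioi_rpow (s := p - 3) (a := ‖f x‖) (by linarith) h0
    rw [show p - 3 + 1 = p - 2 by ring, neg_div, ← div_neg, neg_sub] at this
    rw [← this, setLIntegral_congr (Ioi_ae_eq_Ici (a := ‖f x‖)), ← lintegral_indicator measurableSet_Ioi,
      ← lintegral_indicator measurableSet_Ici]
    refine lintegral_mono fun t => ?_
    simp only [Set.indicator, Set.mem_Ioi, Set.mem_ofPred_eq, Set.mem_Ici]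
    split_ifs <;> first | exact le_rfl | exact zero_le
  refine (mul_le_mul' le_rfl h1).trans_eq ?_
  simp only [← ofReal_norm]
  rw [ENNReal.ofReal_rpow_of_nonneg (norm_nonneg _) (by linarith),
    ENNReal.ofReal_rpow_of_nonneg (norm_nonneg _) (by linarith),
    ← ENNReal.ofReal_mul (by positivity),
    ← ENNReal.ofReal_mul (div_nonneg (by positivity) (by linarith))]
  congr 1
  rw [← mul_div_assoc, ← Real.rpow_add h0]
  ring_nf

/-- The `L^p` constant produced by the Calderón–Zygmund argument. -/
noncomputable def calderonZygmundConst (p : ℝ) (A B : ENNReal) : ENNReal :=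
  2 ^ p * (ENNReal.ofReal p * ((4 * A + 4 * B + 2) * (2 * ENNReal.ofReal (2 ^ (p - 1) / (p - 1))) +
    A * ENNReal.ofReal (1 / (2 - p))))

theorem calderonZygmundConst_ne_top (p : ℝ) {A B : ENNReal} (hp : 0 ≤ p)
    (hA : A ≠ ⊤) (hB : B ≠ ⊤) :
    calderonZygmundConst p A B ≠ ⊤ := by
  have : (2 : ENNReal) ^ p ≠ ⊤ := ENNReal.rpow_ne_top_of_nonneg hp ENNReal.ofNat_ne_top
  unfold calderonZygmundConst
  finiteness

theorem calderonZygmundConst_ne_zero {p : ℝ} (A B : ENNReal) (hp : 1 < p) :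
    calderonZygmundConst p A B ≠ 0 := by
  have h1 : ENNReal.ofReal p ≠ 0 := by simpa using by linarith
  have h2 : ENNReal.ofReal (2 ^ (p - 1) / (p - 1)) ≠ 0 := by
    have : 0 < (2 : ℝ) ^ (p - 1) / (p - 1) := div_pos (by positivity) (by linarith)
    simpa using this
  simp [calderonZygmundConst, h1, h2]

variable [NormedSpace ℂ E] [CompleteSpace E]
  [MeasurableSpace E] [BorelSpace E] [SecondCountableTopology E]
  [NormedAddCommGroup F] [NormedSpace ℂ F] [CompleteSpace F]

/-- `L^p` boundedness, `1 < p < 2`, of convolution singular integrals with operator-valued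
kernel. -/
theorem lintegral_kernelConv_rpow_le {K : ℝ → E →L[ℂ] F} (hK : Continuous K)
    (hKi : Integrable K) {C : ℝ} (hKC : ∀ y, ‖K y‖ ≤ C) {A B : ENNReal}
    (hA : ∀ g : ℝ → E, StronglyMeasurable g →
      ∫⁻ y, ‖kernelConv K g y‖ₑ ^ (2 : ℝ) ≤ A * ∫⁻ y, ‖g y‖ₑ ^ (2 : ℝ))
    (hB : ∀ s : ℝ, ∫⁻ y in {y : ℝ | 2 * |s| ≤ |y|}, ‖K (y - s) - K y‖ₑ ≤ B)
    {p : ℝ} (hp : 1 < p) (hp2 : p < 2) {f : ℝ → E} (hf : StronglyMeasurable f) :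
    ∫⁻ y, ‖kernelConv K f y‖ₑ ^ p ≤ calderonZygmundConst p A B * ∫⁻ y, ‖f y‖ₑ ^ p := by
  have hp0 : 0 < p := by linarith
  by_cases hfp : ∫⁻ y, ‖f y‖ₑ ^ p = ⊤
  · rw [hfp, ENNReal.mul_top (calderonZygmundConst_ne_zero A B hp)]
    exact le_top
  have hfin : ∀ t : ℝ, 0 < t → ∫⁻ x in {x | t / 2 < ‖f x‖}, ‖f x‖ₑ ≠ ⊤ := by
    intro t ht
    have h1 : ∫⁻ x in {x | t / 2 < ‖f x‖}, ‖f x‖ₑ ≤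
        ∫⁻ x in {x | t / 2 < ‖f x‖}, ENNReal.ofReal ((t / 2) ^ (1 - p)) * ‖f x‖ₑ ^ p := by
      refine setLIntegral_mono ((hf.enorm.pow_const p).const_mul _) fun x hx => ?_
      have hx' : t / 2 < ‖f x‖ := hx
      have h0 : 0 < ‖f x‖ := by linarith
      rw [← ofReal_norm, ENNReal.ofReal_rpow_of_nonneg h0.le hp0.le,
        ← ENNReal.ofReal_mul (by positivity)]
      refine ENNReal.ofReal_le_ofReal ?_
      calc ‖f x‖ = ‖f x‖ ^ (1 - p) * ‖f x‖ ^ p := by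
            rw [← Real.rpow_add h0]
            simp
        _ ≤ _ := by
            refine mul_le_mul_of_nonneg_right ?_ (by positivity)
            exact Real.rpow_le_rpow_of_nonpos (by positivity) hx'.le (by linarith)
    rw [lintegral_const_mul _ (hf.enorm.pow_const p)] at h1
    refine ne_top_of_le_ne_top ?_ (h1.trans (mul_le_mul' le_rfl (setLIntegral_le_lintegral _ _)))
    finiteness
  have hTm := stronglyMeasurable_kernelConv hK hf
  have hlayer := lintegral_rpow_eq_lintegral_meas_lt_mul (μ := volume)
    (f := fun y => ‖kernelConv K f y‖ / 2)
    (Filter.Eventually.of_forall fun y => by positivity)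
    (hTm.norm.measurable.div_const 2).aemeasurable hp0
  have h2p : ∀ y, ‖kernelConv K f y‖ₑ ^ p =
      2 ^ p * ENNReal.ofReal ((‖kernelConv K f y‖ / 2) ^ p) := by
    intro y
    rw [← ENNReal.ofReal_rpow_of_nonneg (by positivity) hp0.le,
      ← ENNReal.mul_rpow_of_nonneg _ _ hp0.le, ← ENNReal.ofReal_ofNat 2,
      ← ENNReal.ofReal_mul (by norm_num), mul_div_cancel₀ _ (by norm_num), ofReal_norm]
  simp only [h2p]
  have hmeas : Measurable fun y => ENNReal.ofReal ((‖kernelConv K f y‖ / 2) ^ p) :=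
    ((hTm.norm.measurable.div_const 2).pow_const p).ennreal_ofReal
  rw [lintegral_const_mul _ hmeas, hlayer, calderonZygmundConst, mul_assoc, mul_assoc]
  gcongr
  set H : ℝ → ENNReal := fun t => ∫⁻ x in {x | t / 2 < ‖f x‖}, ‖f x‖ₑ with hH
  set L : ℝ → ENNReal := fun t => ∫⁻ x in {x | ‖f x‖ ≤ t}, ‖f x‖ₑ ^ (2 : ℝ) with hL
  have hHm : Measurable H := Antitone.measurable fun t t' htt' =>
    lintegral_mono_set fun x (hx : t' / 2 < ‖f x‖) => by
      simp only [Set.mem_ofPred_eq]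
      linarith
  have hLm : Measurable L := Monotone.measurable fun t t' htt' =>
    lintegral_mono_set fun x (hx : ‖f x‖ ≤ t) => hx.trans htt'
  have hHm' : Measurable fun t => ENNReal.ofReal (t ^ (p - 2)) * H t :=
    Measurable.mul (by fun_prop) hHm
  have hLm' : Measurable fun t => ENNReal.ofReal (t ^ (p - 3)) * L t :=
    Measurable.mul (by fun_prop) hLm
  calc ∫⁻ t in Set.Ioi (0 : ℝ), volume {y | t < ‖kernelConv K f y‖ / 2} *
        ENNReal.ofReal (t ^ (p - 1))
      ≤ ∫⁻ t in Set.Ioi (0 : ℝ), ((4 * A + 4 * B + 2) * 2 *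
          (ENNReal.ofReal (t ^ (p - 2)) * H t) + A * (ENNReal.ofReal (t ^ (p - 3)) * L t)) := by
        refine setLIntegral_mono ((hHm'.const_mul _).add (hLm'.const_mul _)) fun t ht => ?_
        have ht0 : 0 < t := ht
        have hset : {y | t < ‖kernelConv K f y‖ / 2} = {y | 2 * t < ‖kernelConv K f y‖} := by
          ext y
          simp only [Set.mem_ofPred_eq]
          constructor <;> intro h <;> linarith
        rw [hset]
        refine (mul_le_mul'
          (volume_kernelConv_gt_le hK hKi hKC hA hB hf ht0 (hfin t ht0)) le_rfl).trans_eq ?_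
        have e1 : ENNReal.ofReal (2 / t) * ENNReal.ofReal (t ^ (p - 1)) =
            2 * ENNReal.ofReal (t ^ (p - 2)) := by
          rw [← ENNReal.ofReal_mul (by positivity), ← ENNReal.ofReal_ofNat 2,
            ← ENNReal.ofReal_mul (by norm_num)]
          congr 1
          rw [show p - 1 = (p - 2) + 1 by ring, Real.rpow_add_one ht0.ne']
          field_simp
        have e2 : ENNReal.ofReal (t ^ (-2 : ℝ)) * ENNReal.ofReal (t ^ (p - 1)) =
            ENNReal.ofReal (t ^ (p - 3)) := by
          rw [← ENNReal.ofReal_mul (by positivity), ← Real.rpow_add ht0]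
          ring_nf
        calc _ = (4 * A + 4 * B + 2) *
              ((ENNReal.ofReal (2 / t) * ENNReal.ofReal (t ^ (p - 1))) * H t) +
              A * ((ENNReal.ofReal (t ^ (-2 : ℝ)) * ENNReal.ofReal (t ^ (p - 1))) * L t) := by
              ring
          _ = _ := by
              rw [e1, e2]
              ring
    _ = (4 * A + 4 * B + 2) * 2 *
          (∫⁻ t in Set.Ioi (0 : ℝ), ENNReal.ofReal (t ^ (p - 2)) * H t) +
        A * ∫⁻ t in Set.Ioi (0 : ℝ), ENNReal.ofReal (t ^ (p - 3)) * L t := by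
        rw [lintegral_add_left (hHm'.const_mul _), lintegral_const_mul _ hHm',
          lintegral_const_mul _ hLm']
    _ ≤ (4 * A + 4 * B + 2) * 2 *
          (ENNReal.ofReal (2 ^ (p - 1) / (p - 1)) * ∫⁻ x, ‖f x‖ₑ ^ p) +
        A * (ENNReal.ofReal (1 / (2 - p)) * ∫⁻ x, ‖f x‖ₑ ^ p) := by
        gcongr
        · exact lintegral_high_part_le hf hp
        · exact lintegral_low_part_le hf hp0 hp2
    _ = _ := by ring

end Interpolation

section DyadicSum

theorem min_two_zpow_mul_le {r : ℝ} {n : ℤ} (h1 : (2 : ℝ) ^ n ≤ r) (h2 : r < (2 : ℝ) ^ (n + 1))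
    (k : ℤ) :
    min ((2 : ℝ) ^ k * r) ((2 : ℝ) ^ k * r)⁻¹ ≤ 2 * (2 : ℝ) ^ (-|k + n|) := by
  have hk : (0 : ℝ) < (2 : ℝ) ^ k := by positivity
  have hn : (0 : ℝ) < (2 : ℝ) ^ n := by positivity
  rcases le_total 0 (k + n) with h | h
  · refine (min_le_right _ _).trans ?_
    rw [abs_of_nonneg h, zpow_neg, zpow_add₀ two_ne_zero]
    calc ((2 : ℝ) ^ k * r)⁻¹ ≤ ((2 : ℝ) ^ k * (2 : ℝ) ^ n)⁻¹ := by gcongr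
      _ ≤ 2 * ((2 : ℝ) ^ k * (2 : ℝ) ^ n)⁻¹ := by
        have : (0 : ℝ) ≤ ((2 : ℝ) ^ k * (2 : ℝ) ^ n)⁻¹ := by positivity
        linarith
  · refine (min_le_left _ _).trans ?_
    rw [abs_of_nonpos h, neg_neg, zpow_add₀ two_ne_zero]
    calc (2 : ℝ) ^ k * r ≤ (2 : ℝ) ^ k * (2 : ℝ) ^ (n + 1) := by gcongr
      _ = _ := by
        rw [zpow_add_one₀ two_ne_zero]
        ring

theorem summable_two_zpow_neg_abs : Summable fun k : ℤ => 2 * (2 : ℝ) ^ (-|k|) := by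
  refine Summable.mul_left _ (Summable.of_nat_of_neg ?_ ?_) <;>
  · have := summable_geometric_of_lt_one (r := (1 / 2 : ℝ)) (by norm_num) (by norm_num)
    simpa [zpow_neg] using this

/-- The constant bounding `∑ₖ min (2ᵏ r) (2ᵏ r)⁻¹` uniformly in `r`. -/
noncomputable def dyadicSumConst : ENNReal := ∑' k : ℤ, ENNReal.ofReal (2 * (2 : ℝ) ^ (-|k|))

theorem dyadicSumConst_ne_top : dyadicSumConst ≠ ⊤ :=
  summable_two_zpow_neg_abs.tsum_ofReal_ne_top

theorem tsum_min_two_zpow_mul_le {r : ℝ} (hr : 0 ≤ r) :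
    ∑' k : ℤ, ENNReal.ofReal (min ((2 : ℝ) ^ k * r) ((2 : ℝ) ^ k * r)⁻¹) ≤ dyadicSumConst := by
  rcases hr.eq_or_lt' with rfl | hr
  · simp
  obtain ⟨n, h1, h2⟩ := exists_mem_Ico_zpow hr (one_lt_two : (1 : ℝ) < 2)
  rw [dyadicSumConst, ← (Equiv.addRight n).tsum_eq fun k : ℤ =>
    ENNReal.ofReal (2 * (2 : ℝ) ^ (-|k|))]
  exact ENNReal.tsum_le_tsum fun k => ENNReal.ofReal_le_ofReal (min_two_zpow_mul_le h1 h2 k)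

theorem sum_min_two_zpow_mul_le {ι : Type*} [Fintype ι] {κ : ι → ℤ} (hκ : Function.Injective κ)
    {r : ℝ} (hr : 0 ≤ r) :
    ∑ i, ENNReal.ofReal (min ((2 : ℝ) ^ κ i * r) ((2 : ℝ) ^ κ i * r)⁻¹) ≤ dyadicSumConst := by
  rw [← tsum_fintype (L := .unconditional ι)]
  exact (ENNReal.tsum_comp_le_tsum_of_injective hκ _).trans (tsum_min_two_zpow_mul_le hr)

end DyadicSum

section Dilation

theorem lintegral_comp_mul_left {h : ℝ → ENNReal} (hh : Measurable h) {a : ℝ} (ha : 0 < a) :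
    ENNReal.ofReal a * ∫⁻ y, h (a * y) = ∫⁻ y, h y := by
  rw [← lintegral_map hh (by fun_prop : Measurable fun y : ℝ => a * y),
    Real.map_volume_mul_left ha.ne', lintegral_smul_measure, smul_eq_mul, ← mul_assoc,
    ← ENNReal.ofReal_mul ha.le, abs_of_pos (inv_pos.2 ha), mul_inv_cancel₀ ha.ne']
  simp

/-- The `L¹`-normalised dilate `y ↦ 2ᵏ Φ(2ᵏ y)`. -/
noncomputable def dyadicDilate (Φ : 𝓢(ℝ, ℂ)) (k : ℤ) (y : ℝ) : ℂ :=
  (2 : ℝ) ^ k • Φ ((2 : ℝ) ^ k * y)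

theorem continuous_dyadicDilate (Φ : 𝓢(ℝ, ℂ)) (k : ℤ) : Continuous (dyadicDilate Φ k) := by
  have := Φ.continuous
  unfold dyadicDilate
  fun_prop

theorem integrable_dyadicDilate (Φ : 𝓢(ℝ, ℂ)) (k : ℤ) : Integrable (dyadicDilate Φ k) :=
  (Φ.integrable.comp_mul_left' (zpow_pos two_pos k).ne').smul ((2 : ℝ) ^ k)

theorem norm_dyadicDilate_le (Φ : 𝓢(ℝ, ℂ)) (k : ℤ) :
    ∃ C, ∀ y, ‖dyadicDilate Φ k y‖ ≤ C := by
  obtain ⟨C, hC⟩ := Φ.decay 0 0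
  refine ⟨(2 : ℝ) ^ k * C, fun y => ?_⟩
  have := hC.2 ((2 : ℝ) ^ k * y)
  rw [dyadicDilate, norm_smul, Real.norm_of_nonneg (by positivity)]
  gcongr
  simpa using this

theorem lintegral_enorm_sub_translate_le (Φ : 𝓢(ℝ, ℂ)) (s : ℝ) :
    ∫⁻ y, ‖Φ (y - s) - Φ y‖ₑ ≤ ENNReal.ofReal |s| * ∫⁻ y, ‖deriv Φ y‖ₑ := by
  have hd : Continuous (deriv Φ) := (SchwartzMap.derivCLM ℂ ℂ Φ).continuous
  have hder : ∀ y τ : ℝ, HasDerivAt (fun τ : ℝ => Φ (y - τ * s)) (-s • deriv Φ (y - τ * s)) τ := by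
    intro y τ
    have h1 : HasDerivAt (fun τ : ℝ => y - τ * s) (-s) τ := by
      simpa using ((hasDerivAt_id τ).mul_const s).const_sub y
    exact (Φ.differentiableAt.hasDerivAt).scomp τ h1
  have hbound : ∀ y, ‖Φ (y - s) - Φ y‖ₑ ≤
      ∫⁻ τ in Set.Ioc (0 : ℝ) 1, ENNReal.ofReal |s| * ‖deriv Φ (y - τ * s)‖ₑ := by
    intro y
    have h := intervalIntegral.integral_eq_sub_of_hasDerivAt (a := 0) (b := 1)
      (fun τ _ => hder y τ) (Continuous.intervalIntegrable (by fun_prop) _ _)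
    simp only [one_mul, zero_mul, sub_zero] at h
    rw [← h, intervalIntegral.integral_of_le zero_le_one]
    refine (enorm_integral_le_lintegral_enorm _).trans_eq (lintegral_congr fun τ => ?_)
    rw [enorm_smul, enorm_neg, Real.enorm_eq_ofReal_abs]
  refine (lintegral_mono hbound).trans ?_
  rw [lintegral_lintegral_swap
    ((Continuous.measurable (by fun_prop : Continuous fun p : ℝ × ℝ =>
      ‖deriv Φ (p.1 - p.2 * s)‖ₑ)).const_mul _).aemeasurable]
  have : ∀ τ : ℝ, ∫⁻ y, ENNReal.ofReal |s| * ‖deriv Φ (y - τ * s)‖ₑ =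
      ENNReal.ofReal |s| * ∫⁻ y, ‖deriv Φ y‖ₑ := by
    intro τ
    rw [lintegral_const_mul _ (Continuous.measurable (by fun_prop)),
      lintegral_sub_right_eq_self (fun y => ‖deriv Φ y‖ₑ)]
  simp [this]

theorem mul_lintegral_enorm_sub_translate_le (Φ : 𝓢(ℝ, ℂ)) (s : ℝ) :
    ENNReal.ofReal |s| * ∫⁻ y in {y : ℝ | 2 * |s| ≤ |y|}, ‖Φ (y - s) - Φ y‖ₑ ≤
      2 * ∫⁻ y, ENNReal.ofReal |y| * ‖Φ y‖ₑ := by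
  have hm : Measurable fun y : ℝ => ENNReal.ofReal |y| * ‖Φ y‖ₑ :=
    Measurable.mul (by fun_prop) Φ.continuous.enorm.measurable
  rw [← lintegral_const_mul _ (Continuous.measurable (by fun_prop))]
  calc ∫⁻ y in {y : ℝ | 2 * |s| ≤ |y|}, ENNReal.ofReal |s| * ‖Φ (y - s) - Φ y‖ₑ
      ≤ ∫⁻ y in {y : ℝ | 2 * |s| ≤ |y|}, (ENNReal.ofReal |y - s| * ‖Φ (y - s)‖ₑ +
          ENNReal.ofReal |y| * ‖Φ y‖ₑ) := by
        refine setLIntegral_mono ((hm.comp (measurable_sub_const s)).add hm) fun y hy => ?_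
        have hy' : 2 * |s| ≤ |y| := hy
        have h1 : |s| ≤ |y - s| := by linarith [abs_sub_abs_le_abs_sub y s]
        have h2 : |s| ≤ |y| := by linarith [abs_nonneg s]
        calc ENNReal.ofReal |s| * ‖Φ (y - s) - Φ y‖ₑ
            ≤ ENNReal.ofReal |s| * (‖Φ (y - s)‖ₑ + ‖Φ y‖ₑ) := by
              gcongr
              exact enorm_sub_le
          _ ≤ _ := by
              rw [mul_add]
              gcongr
    _ ≤ ∫⁻ y, (ENNReal.ofReal |y - s| * ‖Φ (y - s)‖ₑ + ENNReal.ofReal |y| * ‖Φ y‖ₑ) :=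
        setLIntegral_le_lintegral _ _
    _ = _ := by
        rw [two_mul (lintegral _ _), lintegral_add_right _ hm,
          lintegral_sub_right_eq_self (fun y : ℝ => ENNReal.ofReal |y| * ‖Φ y‖ₑ)]

/-- The single-scale constant in the Hörmander condition. -/
noncomputable def translationConst (Φ : 𝓢(ℝ, ℂ)) : ENNReal :=
  (∫⁻ y, ‖deriv Φ y‖ₑ) + 2 * ∫⁻ y, ENNReal.ofReal |y| * ‖Φ y‖ₑ

theorem translationConst_ne_top (Φ : 𝓢(ℝ, ℂ)) : translationConst Φ ≠ ⊤ := by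
  have h1 : ∫⁻ y, ‖deriv Φ y‖ₑ ≠ ⊤ := (SchwartzMap.derivCLM ℂ ℂ Φ).integrable.2.ne
  have h2 : ∫⁻ y : ℝ, ENNReal.ofReal |y| * ‖Φ y‖ₑ ≠ ⊤ := by
    have h := (Φ.integrable_pow_mul volume 1).2.ne
    convert h using 3 with y
    beta_reduce
    rw [pow_one, enorm_mul, enorm_norm, enorm_norm, Real.enorm_eq_ofReal_abs]
  unfold translationConst
  finiteness

theorem setLIntegral_enorm_sub_translate_le_min (Φ : 𝓢(ℝ, ℂ)) (s : ℝ) :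
    ∫⁻ y in {y : ℝ | 2 * |s| ≤ |y|}, ‖Φ (y - s) - Φ y‖ₑ ≤
      translationConst Φ * ENNReal.ofReal (min |s| |s|⁻¹) := by
  rcases (abs_nonneg s).eq_or_lt' with hs | hs
  · have : s = 0 := abs_eq_zero.1 hs
    simp [this]
  rcases min_choice |s| |s|⁻¹ with h | h <;> rw [h]
  · rw [mul_comm (translationConst Φ)]
    refine (setLIntegral_le_lintegral _ _).trans ((lintegral_enorm_sub_translate_le Φ s).trans ?_)
    exact mul_le_mul' le_rfl le_self_add
  · have h0 : ENNReal.ofReal |s| ≠ 0 := by simpa using abs_pos.1 hs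
    rw [← ENNReal.mul_le_mul_iff_right h0 ENNReal.ofReal_ne_top]
    refine (mul_lintegral_enorm_sub_translate_le Φ s).trans ?_
    rw [mul_comm (translationConst Φ), ← mul_assoc, ← ENNReal.ofReal_mul hs.le,
      mul_inv_cancel₀ hs.ne', ENNReal.ofReal_one, one_mul]
    exact le_add_self

theorem setLIntegral_dyadicDilate_sub_le (Φ : 𝓢(ℝ, ℂ)) (k : ℤ) (s : ℝ) :
    ∫⁻ y in {y : ℝ | 2 * |s| ≤ |y|}, ‖dyadicDilate Φ k (y - s) - dyadicDilate Φ k y‖ₑ ≤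
      translationConst Φ *
        ENNReal.ofReal (min ((2 : ℝ) ^ k * |s|) ((2 : ℝ) ^ k * |s|)⁻¹) := by
  have hk : (0 : ℝ) < (2 : ℝ) ^ k := by positivity
  have hms : ∀ s : ℝ, MeasurableSet {y : ℝ | 2 * |s| ≤ |y|} := fun s =>
    measurableSet_le measurable_const (by fun_prop)
  have h := setLIntegral_enorm_sub_translate_le_min Φ ((2 : ℝ) ^ k * s)
  rw [abs_mul, abs_of_pos hk] at h
  refine le_trans (le_of_eq ?_) h
  have hms' : MeasurableSet {y : ℝ | 2 * ((2 : ℝ) ^ k * |s|) ≤ |y|} :=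
    measurableSet_le measurable_const (by fun_prop)
  rw [← lintegral_indicator (hms s), ← lintegral_indicator hms', ← lintegral_comp_mul_left
    (Measurable.indicator (Continuous.measurable (by fun_prop)) hms') hk,
    ← lintegral_const_mul']
  · refine lintegral_congr fun y => ?_
    have hiff : 2 * ((2 : ℝ) ^ k * |s|) ≤ |(2 : ℝ) ^ k * y| ↔ 2 * |s| ≤ |y| := by
      rw [abs_mul, abs_of_pos hk, mul_left_comm, mul_le_mul_iff_right₀ hk]
    simp only [Set.indicator, Set.mem_ofPred_eq, hiff]
    split_ifs
    · rw [dyadicDilate, dyadicDilate, ← smul_sub, enorm_smul, Real.enorm_eq_ofReal_abs,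
        abs_of_pos hk, mul_sub]
    · simp
  · exact ENNReal.ofReal_ne_top

variable {E F : Type*} [NormedAddCommGroup E] [NormedSpace ℂ E]
  [NormedAddCommGroup F] [NormedSpace ℂ F] {ι : Type*} [Fintype ι]

/-- The operator-valued kernel `∑ᵢ 2^κᵢ Φ(2^κᵢ y) Lᵢ`. -/
noncomputable def dyadicKernel (Φ : 𝓢(ℝ, ℂ)) (κ : ι → ℤ) (L : ι → E →L[ℂ] F) (y : ℝ) :
    E →L[ℂ] F :=
  ∑ i, dyadicDilate Φ (κ i) y • L i

theorem continuous_dyadicKernel (Φ : 𝓢(ℝ, ℂ)) (κ : ι → ℤ) (L : ι → E →L[ℂ] F) :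
    Continuous (dyadicKernel Φ κ L) :=
  continuous_finsetSum _ fun i _ => (continuous_dyadicDilate Φ (κ i)).smul continuous_const

theorem integrable_dyadicKernel (Φ : 𝓢(ℝ, ℂ)) (κ : ι → ℤ) (L : ι → E →L[ℂ] F) :
    Integrable (dyadicKernel Φ κ L) := by
  have h : ∀ i, Integrable fun y => dyadicDilate Φ (κ i) y • L i := fun i =>
    (integrable_dyadicDilate Φ (κ i)).smul_const (L i)
  exact integrable_finsetSum (ε' := E →L[ℂ] F) Finset.univ fun i _ => h i

theorem norm_dyadicKernel_le (Φ : 𝓢(ℝ, ℂ)) (κ : ι → ℤ) (L : ι → E →L[ℂ] F) :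
    ∃ C, ∀ y, ‖dyadicKernel Φ κ L y‖ ≤ C := by
  choose C hC using fun i => norm_dyadicDilate_le Φ (κ i)
  refine ⟨∑ i, C i * ‖L i‖, fun y => (norm_sum_le _ _).trans (Finset.sum_le_sum fun i _ => ?_)⟩
  rw [norm_smul]
  gcongr
  exact hC i y

theorem setLIntegral_dyadicKernel_sub_le (Φ : 𝓢(ℝ, ℂ)) {κ : ι → ℤ} (hκ : Function.Injective κ)
    {L : ι → E →L[ℂ] F} (hL : ∀ i, ‖L i‖ ≤ 1) (s : ℝ) :
    ∫⁻ y in {y : ℝ | 2 * |s| ≤ |y|}, ‖dyadicKernel Φ κ L (y - s) - dyadicKernel Φ κ L y‖ₑ ≤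
      translationConst Φ * dyadicSumConst := by
  have hpt : ∀ y, ‖dyadicKernel Φ κ L (y - s) - dyadicKernel Φ κ L y‖ₑ ≤
      ∑ i, ‖dyadicDilate Φ (κ i) (y - s) - dyadicDilate Φ (κ i) y‖ₑ := by
    intro y
    rw [dyadicKernel, dyadicKernel, ← Finset.sum_sub_distrib]
    refine (enorm_sum_le (ι := ι) (ε := E →L[ℂ] F) Finset.univ _).trans (Finset.sum_le_sum fun i _ => ?_)
    rw [← sub_smul, enorm_smul]
    refine (mul_le_mul' le_rfl ?_).trans_eq (mul_one _)
    rw [← ofReal_norm]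
    exact ENNReal.ofReal_le_one.2 (hL i)
  refine (lintegral_mono hpt).trans ?_
  rw [lintegral_finsetSum _ fun i _ => ?_]
  · calc _ ≤ ∑ i, translationConst Φ *
        ENNReal.ofReal (min ((2 : ℝ) ^ κ i * |s|) ((2 : ℝ) ^ κ i * |s|)⁻¹) :=
          Finset.sum_le_sum fun i _ => setLIntegral_dyadicDilate_sub_le Φ (κ i) s
      _ ≤ _ := by
          rw [← Finset.mul_sum]
          gcongr
          exact sum_min_two_zpow_mul_le hκ (abs_nonneg s)
  · have := continuous_dyadicDilate Φ (κ i)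
    exact Continuous.measurable (by fun_prop)

end Dilation

section Holder

variable {E F : Type*} [NormedAddCommGroup E] [NormedSpace ℂ E]
  [NormedAddCommGroup F] [NormedSpace ℂ F]

theorem lintegral_enorm_rpow_ne_top_of_bounded {G : Type*} [NormedAddCommGroup G] {K : ℝ → G}
    (hKi : Integrable K) {C : ℝ} (hKC : ∀ y, ‖K y‖ ≤ C) {p : ℝ} (hp : 1 ≤ p) :
    ∫⁻ y, ‖K y‖ₑ ^ p ≠ ⊤ := by
  have hpt : ∀ y, ‖K y‖ₑ ^ p ≤ ENNReal.ofReal C ^ (p - 1) * ‖K y‖ₑ := by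
    intro y
    calc ‖K y‖ₑ ^ p = ‖K y‖ₑ ^ (p - 1) * ‖K y‖ₑ ^ (1 : ℝ) := by
          rw [← ENNReal.rpow_add_of_nonneg _ _ (by linarith) zero_le_one, sub_add_cancel]
      _ ≤ _ := by
          rw [ENNReal.rpow_one]
          gcongr
          rw [← ofReal_norm]
          exact ENNReal.ofReal_le_ofReal (hKC y)
  refine ((lintegral_mono hpt).trans_lt ?_).ne
  rw [lintegral_const_mul' _ _ (by finiteness)]
  exact ENNReal.mul_lt_top (ENNReal.rpow_lt_top_of_nonneg (by linarith) (by finiteness)) hKi.2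

theorem lintegral_kernel_apply_le {K : ℝ → E →L[ℂ] F} (hK : Continuous K) {f : ℝ → E}
    (hf : StronglyMeasurable f) {p q : ℝ} (hpq : p.HolderConjugate q) (y : ℝ) :
    ∫⁻ z, ‖K (y - z) (f z)‖ₑ ≤
      (∫⁻ z, ‖K z‖ₑ ^ p) ^ (1 / p) * (∫⁻ z, ‖f z‖ₑ ^ q) ^ (1 / q) := by
  have h := ENNReal.lintegral_mul_le_Lp_mul_Lq volume hpq (f := fun z => ‖K (y - z)‖ₑ)
    (g := fun z => ‖f z‖ₑ) (Continuous.measurable (by fun_prop)).aemeasurable hf.enorm.aemeasurable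
  rw [lintegral_sub_left_eq_self (fun z => ‖K z‖ₑ ^ p)] at h
  exact (lintegral_mono fun z => (K (y - z)).le_opENorm (f z)).trans h

theorem integrable_kernel_apply_of_holder {K : ℝ → E →L[ℂ] F} (hK : Continuous K)
    (hKi : Integrable K) {C : ℝ} (hKC : ∀ y, ‖K y‖ ≤ C) {f : ℝ → E} (hf : StronglyMeasurable f)
    {p q : ℝ} (hpq : p.HolderConjugate q) (hfq : ∫⁻ z, ‖f z‖ₑ ^ q ≠ ⊤) (y : ℝ) :
    Integrable (fun z => K (y - z) (f z)) := by
  refine ⟨((stronglyMeasurable_kernelConv_integrand hK hf).comp_measurable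
    (measurable_const.prodMk measurable_id : Measurable fun z : ℝ => (y, z))).aestronglyMeasurable,
    (lintegral_kernel_apply_le hK hf hpq y).trans_lt ?_⟩
  have := lintegral_enorm_rpow_ne_top_of_bounded hKi hKC hpq.lt.le
  have h1 : 0 ≤ 1 / p := by have := hpq.pos; positivity
  have h2 : 0 ≤ 1 / q := by have := hpq.symm.pos; positivity
  exact ENNReal.mul_lt_top (ENNReal.rpow_lt_top_of_nonneg h1 this)
    (ENNReal.rpow_lt_top_of_nonneg h2 hfq)

theorem eLpNorm_two_eq_lintegral {G : Type*} [NormedAddCommGroup G] (u : ℝ → G) :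
    eLpNorm u 2 volume = (∫⁻ y, ‖u y‖ₑ ^ (2 : ℝ)) ^ (1 / (2 : ℝ)) := by
  simp [eLpNorm_eq_lintegral_rpow_enorm_toReal two_ne_zero ENNReal.ofNat_ne_top]

/-- An `L²` bound for convolution operators only has to be checked on Schwartz functions. -/
theorem lintegral_kernelConv_sq_le_of_schwartz [CompleteSpace E] [CompleteSpace F]
    {K : ℝ → E →L[ℂ] F} (hK : Continuous K)
    (hKi : Integrable K) {C : ℝ} (hKC : ∀ y, ‖K y‖ ≤ C) {A : ENNReal} (hA : A ≠ 0)
    (hA' : A ≠ ⊤)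
    (h : ∀ u : 𝓢(ℝ, E), ∫⁻ y, ‖kernelConv K u y‖ₑ ^ (2 : ℝ) ≤ A * ∫⁻ y, ‖u y‖ₑ ^ (2 : ℝ))
    {u : ℝ → E} (hu : StronglyMeasurable u) :
    ∫⁻ y, ‖kernelConv K u y‖ₑ ^ (2 : ℝ) ≤ A * ∫⁻ y, ‖u y‖ₑ ^ (2 : ℝ) := by
  by_cases hfin : ∫⁻ y, ‖u y‖ₑ ^ (2 : ℝ) = ⊤
  · rw [hfin, ENNReal.mul_top hA]
    exact le_top
  have hmem : MemLp u 2 volume := by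
    refine ⟨hu.aestronglyMeasurable, ?_⟩
    rw [eLpNorm_two_eq_lintegral]
    exact ENNReal.rpow_lt_top_of_nonneg (by norm_num) hfin
  obtain ⟨v, hv, hvlim⟩ := mem_closure_iff_seq_limit.1
    (SchwartzMap.denseRange_toLpCLM (F := E) (p := 2) (μ := (volume : Measure ℝ))
      ENNReal.ofNat_ne_top (hmem.toLp u))
  choose w hw using hv
  have hlim : Filter.Tendsto (fun n => eLpNorm (⇑(w n) - u) 2 volume) Filter.atTop (nhds 0) := by
    refine ((Lp.tendsto_Lp_iff_tendsto_eLpNorm' _ _).1 hvlim).congr fun n => ?_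
    refine eLpNorm_congr_ae ?_
    rw [← hw n]
    filter_upwards [(w n).coeFn_toLp 2 volume, hmem.coeFn_toLp] with y h1 h2
    simp only [Pi.sub_apply, h2]
    congr 1
  have hInt : ∀ (f : ℝ → E), StronglyMeasurable f → MemLp f 2 volume → ∀ y,
      Integrable fun z => K (y - z) (f z) := by
    intro f hf hf2 y
    refine integrable_kernel_apply_of_holder hK hKi hKC hf Real.HolderConjugate.two_two ?_ y
    have := hf2.2.ne
    rw [eLpNorm_two_eq_lintegral] at this
    contrapose! this
    rw [this]
    exact ENNReal.top_rpow_of_pos (by norm_num)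
  have hpt : ∀ y, Filter.Tendsto (fun n => kernelConv K (w n) y) Filter.atTop
      (nhds (kernelConv K u y)) := by
    intro y
    rw [tendsto_iff_edist_tendsto_0]
    have hbound : ∀ n, edist (kernelConv K (w n) y) (kernelConv K u y) ≤
        (∫⁻ z, ‖K z‖ₑ ^ (2 : ℝ)) ^ (1 / (2 : ℝ)) * eLpNorm (⇑(w n) - u) 2 volume := by
      intro n
      rw [edist_eq_enorm_sub, kernelConv, kernelConv, ← integral_sub
        (hInt _ (w n).continuous.stronglyMeasurable ((w n).memLp 2) y) (hInt _ hu hmem y),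
        eLpNorm_two_eq_lintegral]
      refine (enorm_integral_le_lintegral_enorm _).trans ?_
      simp only [← map_sub]
      exact lintegral_kernel_apply_le hK ((w n).continuous.stronglyMeasurable.sub hu)
        Real.HolderConjugate.two_two y
    refine tendsto_of_tendsto_of_tendsto_of_le_of_le tendsto_const_nhds ?_ (fun _ => zero_le)
      hbound
    have := ENNReal.Tendsto.const_mul hlim (a := (∫⁻ z, ‖K z‖ₑ ^ (2 : ℝ)) ^ (1 / (2 : ℝ)))
      (Or.inr (ENNReal.rpow_ne_top_of_nonneg (by norm_num)
        (lintegral_enorm_rpow_ne_top_of_bounded hKi hKC one_le_two)))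
    simpa using this
  have hfatou := Lp.eLpNorm_lim_le_liminf_eLpNorm (p := 2) (μ := volume)
    (fun n => (stronglyMeasurable_kernelConv hK
      (w n).continuous.stronglyMeasurable).aestronglyMeasurable) (kernelConv K u)
    (Filter.Eventually.of_forall hpt)
  have hconv : Filter.Tendsto (fun n => eLpNorm (w n) 2 volume) Filter.atTop
      (nhds (eLpNorm u 2 volume)) := by
    rw [← Lp.enorm_toLp hmem]
    refine ((continuous_enorm.tendsto _).comp hvlim).congr fun n => ?_
    rw [Function.comp_apply, ← hw n, Lp.enorm_def]
    exact eLpNorm_congr_ae ((w n).coeFn_toLp 2 volume)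
  have hle : eLpNorm (kernelConv K u) 2 volume ≤ A ^ (1 / (2 : ℝ)) * eLpNorm u 2 volume := by
    refine hfatou.trans ?_
    have h1 := ENNReal.Tendsto.const_mul hconv (a := A ^ (1 / (2 : ℝ)))
      (Or.inr (ENNReal.rpow_ne_top_of_nonneg (by norm_num) hA'))
    rw [← h1.liminf_eq]
    refine Filter.liminf_le_liminf (Filter.Eventually.of_forall fun n => ?_)
    rw [eLpNorm_two_eq_lintegral, eLpNorm_two_eq_lintegral,
      ← ENNReal.mul_rpow_of_nonneg _ _ (by norm_num)]
    exact ENNReal.rpow_le_rpow (h (w n)) (by norm_num)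
  rw [eLpNorm_two_eq_lintegral, eLpNorm_two_eq_lintegral,
      ← ENNReal.mul_rpow_of_nonneg _ _ (by norm_num)] at hle
  exact (ENNReal.rpow_le_rpow_iff (by norm_num)).1 hle

end Holder

section Fourier

theorem lintegral_enorm_fourier_sq (u : 𝓢(ℝ, ℂ)) :
    ∫⁻ ξ, ‖𝓕 u ξ‖ₑ ^ (2 : ℝ) = ∫⁻ y, ‖u y‖ₑ ^ (2 : ℝ) := by
  have h : ∀ v : 𝓢(ℝ, ℂ), ∫⁻ y, ‖v y‖ₑ ^ (2 : ℝ) = ENNReal.ofReal (∫ y, ‖v y‖ ^ 2) := by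
    intro v
    rw [ofReal_integral_eq_lintegral_ofReal (μ := volume)
      ((memLp_two_iff_integrable_sq_norm v.continuous.aestronglyMeasurable).1 (v.memLp 2 volume))
      (Filter.Eventually.of_forall fun y => by positivity)]
    refine lintegral_congr fun y => ?_
    rw [ENNReal.ofReal_pow (norm_nonneg _), ofReal_norm, ← ENNReal.rpow_natCast]
    norm_num
  rw [h, h, SchwartzMap.integral_norm_sq_fourier]

/-- The dyadic dilate as a Schwartz function. -/
noncomputable def schwartzDilate (Φ : 𝓢(ℝ, ℂ)) (k : ℤ) : 𝓢(ℝ, ℂ) :=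
  (2 : ℝ) ^ k • SchwartzMap.compCLMOfContinuousLinearEquiv ℂ
    (ContinuousLinearEquiv.unitsEquivAut ℝ (Units.mk0 ((2 : ℝ) ^ k) (zpow_pos two_pos k).ne')) Φ

theorem schwartzDilate_apply (Φ : 𝓢(ℝ, ℂ)) (k : ℤ) (y : ℝ) :
    schwartzDilate Φ k y = dyadicDilate Φ k y := by
  simp [schwartzDilate, dyadicDilate, mul_comm]

theorem fourier_schwartzDilate (Φ : 𝓢(ℝ, ℂ)) (k : ℤ) (ξ : ℝ) :
    𝓕 (schwartzDilate Φ k) ξ = 𝓕 Φ ((2 : ℝ) ^ (-k) * ξ) := by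
  have hk : (0 : ℝ) < (2 : ℝ) ^ k := by positivity
  rw [SchwartzMap.fourier_coe, SchwartzMap.fourier_coe, Real.fourier_real_eq, Real.fourier_real_eq]
  have h := Measure.integral_comp_mul_left
    (fun y : ℝ => Real.fourierChar (-(y * ((2 : ℝ) ^ (-k) * ξ))) • Φ y) ((2 : ℝ) ^ k)
  rw [abs_of_pos (inv_pos.2 hk)] at h
  rw [eq_comm, inv_smul_eq_iff₀ hk.ne'] at h
  rw [h, ← integral_smul]
  refine integral_congr_ae (Filter.Eventually.of_forall fun y => ?_)
  beta_reduce
  rw [schwartzDilate_apply, dyadicDilate, smul_comm]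
  congr 4
  rw [zpow_neg]
  field_simp

theorem integral_dyadicDilate_mul_eq (Φ u : 𝓢(ℝ, ℂ)) (k : ℤ) (y : ℝ) :
    ∫ z, dyadicDilate Φ k (y - z) * u z =
      SchwartzMap.convolution (ContinuousLinearMap.mul ℂ ℂ) u (schwartzDilate Φ k) y := by
  rw [SchwartzMap.convolution_apply, convolution_def]
  refine integral_congr_ae (Filter.Eventually.of_forall fun z => ?_)
  simp [schwartzDilate_apply, mul_comm]

theorem lintegral_dyadicDilate_conv_sq (Φ u : 𝓢(ℝ, ℂ)) (k : ℤ) :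
    ∫⁻ y, ‖∫ z, dyadicDilate Φ k (y - z) * u z‖ₑ ^ (2 : ℝ) =
      ∫⁻ ξ, ‖𝓕 Φ ((2 : ℝ) ^ (-k) * ξ)‖ₑ ^ (2 : ℝ) * ‖𝓕 u ξ‖ₑ ^ (2 : ℝ) := by
  simp only [integral_dyadicDilate_mul_eq]
  rw [← lintegral_enorm_fourier_sq, SchwartzMap.fourier_convolution]
  refine lintegral_congr fun ξ => ?_
  rw [SchwartzMap.pairing_apply]
  beta_reduce
  rw [ContinuousLinearMap.mul_apply', fourier_schwartzDilate, enorm_mul,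
    ENNReal.mul_rpow_of_nonneg _ _ zero_le_two, mul_comm]

variable {ι : Type*} [Fintype ι]

theorem EuclideanSpace.enorm_rpow_two_eq_sum (v : EuclideanSpace ℂ ι) :
    ‖v‖ₑ ^ (2 : ℝ) = ∑ i, ‖v i‖ₑ ^ (2 : ℝ) := by
  have h : ∀ {G : Type _} [NormedAddCommGroup G] (x : G), ‖x‖ₑ ^ (2 : ℝ) =
      ENNReal.ofReal (‖x‖ ^ 2) := by
    intro G _ x
    rw [ENNReal.ofReal_pow (norm_nonneg _), ofReal_norm, ← ENNReal.rpow_natCast]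
    norm_num
  rw [h, EuclideanSpace.norm_sq_eq, ENNReal.ofReal_sum_of_nonneg fun i _ => by positivity]
  refine Finset.sum_congr rfl fun i _ => ?_
  rw [ENNReal.ofReal_pow (norm_nonneg _), ofReal_norm, ← ENNReal.rpow_natCast]
  norm_num

/-- The kernel of the synthesis operator `(hᵢ)ᵢ ↦ ∑ᵢ Φ_{κᵢ} * hᵢ`. -/
noncomputable def synthesisKernel (Φ : 𝓢(ℝ, ℂ)) (κ : ι → ℤ) : ℝ → EuclideanSpace ℂ ι →L[ℂ] ℂ :=
  dyadicKernel Φ κ fun i => EuclideanSpace.proj i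

theorem synthesisKernel_apply (Φ : 𝓢(ℝ, ℂ)) (κ : ι → ℤ) (y : ℝ) (v : EuclideanSpace ℂ ι) :
    synthesisKernel Φ κ y v = ∑ i, dyadicDilate Φ (κ i) y * v i := by
  simp [synthesisKernel, dyadicKernel]

variable [DecidableEq ι]

/-- The kernel of the analysis operator `u ↦ (Φ_{κᵢ} * u)ᵢ`. -/
noncomputable def analysisKernel (Φ : 𝓢(ℝ, ℂ)) (κ : ι → ℤ) : ℝ → ℂ →L[ℂ] EuclideanSpace ℂ ι :=
  dyadicKernel Φ κ fun i => ContinuousLinearMap.toSpanSingleton ℂ (EuclideanSpace.single i 1)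

theorem analysisKernel_apply (Φ : 𝓢(ℝ, ℂ)) (κ : ι → ℤ) (y : ℝ) (c : ℂ) (i : ι) :
    analysisKernel Φ κ y c i = dyadicDilate Φ (κ i) y * c := by
  simp [analysisKernel, dyadicKernel, Pi.single_apply]

theorem kernelConv_analysisKernel_schwartz (Φ : 𝓢(ℝ, ℂ)) (κ : ι → ℤ) (u : 𝓢(ℝ, ℂ)) (y : ℝ) (i : ι) :
    kernelConv (analysisKernel Φ κ) u y i = ∫ z, dyadicDilate Φ (κ i) (y - z) * u z := by
  obtain ⟨C, hC⟩ := norm_dyadicKernel_le Φ κ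
    fun i => ContinuousLinearMap.toSpanSingleton ℂ (EuclideanSpace.single i (1 : ℂ))
  have hInt := integrable_kernel_apply_of_bounded_kernel
    (K := analysisKernel Φ κ) (continuous_dyadicKernel _ _ _) hC
    u.continuous.stronglyMeasurable (u.integrable (μ := volume)) y
  have h := (EuclideanSpace.proj (𝕜 := ℂ) i).integral_comp_comm hInt
  simp only [PiLp.proj_apply, analysisKernel_apply] at h
  exact h.symm

theorem lintegral_analysis_sq_le (Φ : 𝓢(ℝ, ℂ)) {κ : ι → ℤ} (hκ : Function.Injective κ)
    {A : ENNReal} (hA' : A ≠ ⊤)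
    (hΦ : ∀ ξ, ‖𝓕 Φ ξ‖ₑ ^ (2 : ℝ) ≤ A * ENNReal.ofReal (min |ξ| |ξ|⁻¹))
    {u : ℝ → ℂ} (hu : StronglyMeasurable u) :
    ∫⁻ y, ‖kernelConv (analysisKernel Φ κ) u y‖ₑ ^ (2 : ℝ) ≤
      (A * dyadicSumConst + 1) * ∫⁻ y, ‖u y‖ₑ ^ (2 : ℝ) := by
  obtain ⟨C, hC⟩ := norm_dyadicKernel_le Φ κ
    fun i => ContinuousLinearMap.toSpanSingleton ℂ (EuclideanSpace.single i (1 : ℂ))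
  have hfin := dyadicSumConst_ne_top
  refine lintegral_kernelConv_sq_le_of_schwartz (K := analysisKernel Φ κ)
    (continuous_dyadicKernel _ _ _) (integrable_dyadicKernel _ _ _) hC (by simp) (by finiteness) (fun v => ?_) hu
  have hcont : ∀ i, Measurable fun y => ‖∫ z, dyadicDilate Φ (κ i) (y - z) * v z‖ₑ ^ (2 : ℝ) := by
    intro i
    simp only [integral_dyadicDilate_mul_eq]
    exact (SchwartzMap.continuous _).enorm.measurable.pow_const _
  simp only [EuclideanSpace.enorm_rpow_two_eq_sum, kernelConv_analysisKernel_schwartz]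
  rw [lintegral_finsetSum _ fun i _ => hcont i]
  simp only [lintegral_dyadicDilate_conv_sq]
  rw [← lintegral_finsetSum _ fun i _ => ?_, ← lintegral_enorm_fourier_sq v,
    ← lintegral_const_mul]
  · refine lintegral_mono fun ξ => ?_
    rw [← Finset.sum_mul]
    refine mul_le_mul' (le_trans ?_ le_self_add) le_rfl
    calc _ ≤ ∑ i, A * ENNReal.ofReal (min ((2 : ℝ) ^ (-κ i) * |ξ|) ((2 : ℝ) ^ (-κ i) * |ξ|)⁻¹) := by
          refine Finset.sum_le_sum fun i _ => ?_
          have := hΦ ((2 : ℝ) ^ (-κ i) * ξ)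
          rwa [abs_mul, abs_of_pos (zpow_pos two_pos (-κ i))] at this
      _ ≤ _ := by
          rw [← Finset.mul_sum]
          exact mul_le_mul' le_rfl
            (sum_min_two_zpow_mul_le (neg_injective.comp hκ) (abs_nonneg ξ))
  · exact (𝓕 v).continuous.enorm.measurable.pow_const _
  · exact (((𝓕 Φ).continuous.comp (by fun_prop)).enorm.measurable.pow_const _).mul
      ((𝓕 v).continuous.enorm.measurable.pow_const _)

end Fourier

section Duality

variable {E E' : Type*} [NormedAddCommGroup E] [NormedSpace ℂ E]
  [NormedAddCommGroup E'] [NormedSpace ℂ E'] [CompleteSpace E']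

/-- Fubini's theorem moves a convolution operator onto its transpose. -/
theorem integral_kernelConv_mul {K : ℝ → E →L[ℂ] ℂ} {K' : ℝ → ℂ →L[ℂ] E'}
    (hK : Continuous K) (hKi : Integrable K) {M : ℝ} (hKM : ∀ y, ‖K y‖ ≤ M)
    (hK' : Continuous K') {M' : ℝ} (hKM' : ∀ y, ‖K' y‖ ≤ M') (β : E →L[ℂ] E' →L[ℂ] ℂ)
    (hKK' : ∀ y v c, K y v * c = β v (K' (-y) c)) {p q : ℝ} (hpq : p.HolderConjugate q)
    {h : ℝ → E} (hh : StronglyMeasurable h) (hhq : ∫⁻ z, ‖h z‖ₑ ^ q ≠ ⊤)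
    {u : ℝ → ℂ} (hu : StronglyMeasurable u) (hui : Integrable u) :
    Integrable (fun y => kernelConv K h y * u y) ∧
      ∫ y, kernelConv K h y * u y = ∫ z, β (h z) (kernelConv K' u z) := by
  have hsm : StronglyMeasurable fun r : ℝ × ℝ => K (r.1 - r.2) (h r.2) * u r.1 :=
    (stronglyMeasurable_kernelConv_integrand hK hh).mul (hu.comp_measurable measurable_fst)
  have hInt : Integrable (fun r : ℝ × ℝ => K (r.1 - r.2) (h r.2) * u r.1)
      ((volume : Measure ℝ).prod volume) := by
    refine ⟨hsm.aestronglyMeasurable, ?_⟩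
    rw [HasFiniteIntegral, lintegral_prod _ hsm.enorm.aemeasurable]
    simp only [enorm_mul]
    set D := (∫⁻ z, ‖K z‖ₑ ^ p) ^ (1 / p) * (∫⁻ z, ‖h z‖ₑ ^ q) ^ (1 / q) with hD
    have hDfin : D ≠ ⊤ := by
      have h0 := lintegral_enorm_rpow_ne_top_of_bounded hKi hKM hpq.lt.le
      exact ENNReal.mul_ne_top
        (ENNReal.rpow_ne_top_of_nonneg (one_div_nonneg.2 hpq.pos.le) h0)
        (ENNReal.rpow_ne_top_of_nonneg (one_div_nonneg.2 hpq.symm.pos.le) hhq)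
    calc ∫⁻ y, ∫⁻ z, ‖K (y - z) (h z)‖ₑ * ‖u y‖ₑ
        ≤ ∫⁻ y, D * ‖u y‖ₑ := by
          refine lintegral_mono fun y => ?_
          rw [lintegral_mul_const' _ _ (by finiteness)]
          exact mul_le_mul' (lintegral_kernel_apply_le hK hh hpq y) le_rfl
      _ = D * ∫⁻ y, ‖u y‖ₑ := lintegral_const_mul' _ _ hDfin
      _ < ⊤ := ENNReal.mul_lt_top hDfin.lt_top hui.2
  have hL : ∀ y, ∫ z, K (y - z) (h z) * u y = kernelConv K h y * u y := fun y =>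
    integral_mul_const _ _
  have hR : ∀ z, ∫ y, K (y - z) (h z) * u y = β (h z) (kernelConv K' u z) := by
    intro z
    have h1 := (β (h z)).integral_comp_comm
      (integrable_kernel_apply_of_bounded_kernel hK' hKM' hu hui z)
    rw [kernelConv, ← h1]
    refine integral_congr_ae (Filter.Eventually.of_forall fun y => ?_)
    simp [hKK']
  refine ⟨hInt.integral_prod_left.congr (Filter.Eventually.of_forall hL), ?_⟩
  calc ∫ y, kernelConv K h y * u y = ∫ y, ∫ z, K (y - z) (h z) * u y := by simp only [hL]
    _ = ∫ z, ∫ y, K (y - z) (h z) * u y := integral_integral_swap hInt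
    _ = _ := by simp only [hR]

theorem ENNReal.le_mul_of_le_mul_rpow {p q : ℝ} (hpq : p.HolderConjugate q) {Y H C : ENNReal}
    (hY : Y ≠ ⊤) (h : Y ≤ H ^ (1 / q) * (C * Y) ^ (1 / p)) : Y ≤ C ^ (q / p) * H := by
  have hp := hpq.pos
  have hq := hpq.symm.pos
  rcases eq_or_ne Y 0 with rfl | hY0
  · exact zero_le
  rw [ENNReal.mul_rpow_of_nonneg _ _ (by positivity), ← mul_assoc] at h
  have hsplit : Y = Y ^ (1 / q) * Y ^ (1 / p) := by
    rw [← ENNReal.rpow_add _ _ hY0 hY, one_div, one_div, hpq.symm.inv_add_inv_eq_one,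
      ENNReal.rpow_one]
  have h2 : Y ^ (1 / q) ≤ H ^ (1 / q) * C ^ (1 / p) := by
    conv_lhs at h => rw [hsplit]
    exact (ENNReal.mul_le_mul_iff_left (by simp [hY0, hY]) (by simp [hY0, hY])).1 h
  calc Y = (Y ^ (1 / q)) ^ q := by
        rw [← ENNReal.rpow_mul, one_div_mul_cancel hq.ne', ENNReal.rpow_one]
    _ ≤ (H ^ (1 / q) * C ^ (1 / p)) ^ q := by gcongr
    _ = C ^ (q / p) * H := by
        rw [ENNReal.mul_rpow_of_nonneg _ _ hq.le, ← ENNReal.rpow_mul, ← ENNReal.rpow_mul,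
          one_div_mul_cancel hq.ne', ENNReal.rpow_one, mul_comm, one_div_mul_eq_div]

theorem lintegral_minorant_rpow_le {K : ℝ → E →L[ℂ] ℂ} {K' : ℝ → ℂ →L[ℂ] E'}
    (hK : Continuous K) (hKi : Integrable K) {M : ℝ} (hKM : ∀ y, ‖K y‖ ≤ M)
    (hK' : Continuous K') {M' : ℝ} (hKM' : ∀ y, ‖K' y‖ ≤ M') (β : E →L[ℂ] E' →L[ℂ] ℂ)
    (hβ : ∀ v w, ‖β v w‖ ≤ ‖v‖ * ‖w‖)
    (hKK' : ∀ y v c, K y v * c = β v (K' (-y) c)) {p q : ℝ} (hpq : p.HolderConjugate q)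
    {C : ENNReal} (hC : ∀ u : ℝ → ℂ, StronglyMeasurable u →
      ∫⁻ y, ‖kernelConv K' u y‖ₑ ^ p ≤ C * ∫⁻ y, ‖u y‖ₑ ^ p)
    {h : ℝ → E} (hh : StronglyMeasurable h) (hhq : ∫⁻ z, ‖h z‖ₑ ^ q ≠ ⊤)
    {m : ℝ → ℝ} (hm : Measurable m) (hm0 : ∀ y, 0 ≤ m y) (hmG : ∀ y, m y ≤ ‖kernelConv K h y‖)
    (hm1 : ∫⁻ y, ENNReal.ofReal (m y) ^ (q - 1) ≠ ⊤) (hmq : ∫⁻ y, ENNReal.ofReal (m y) ^ q ≠ ⊤) :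
    ∫⁻ y, ENNReal.ofReal (m y) ^ q ≤ C ^ (q / p) * ∫⁻ z, ‖h z‖ₑ ^ q := by
  have hp := hpq.pos
  have hq := hpq.symm.pos
  have hq1 : 0 < q - 1 := sub_pos.2 hpq.symm.lt
  set G := kernelConv K h with hG
  have hGm : StronglyMeasurable G := stronglyMeasurable_kernelConv hK hh
  set u : ℝ → ℂ := fun y => (starRingEnd ℂ (G y) / (‖G y‖ : ℂ)) * ((m y ^ (q - 1) : ℝ) : ℂ) with hu
  have hum : StronglyMeasurable u := by
    refine Measurable.stronglyMeasurable ?_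
    have := hGm.measurable
    fun_prop
  have hun : ∀ y, ‖u y‖ₑ ≤ ENNReal.ofReal (m y) ^ (q - 1) := by
    intro y
    rw [ENNReal.ofReal_rpow_of_nonneg (hm0 y) hq1.le, ← ofReal_norm]
    refine ENNReal.ofReal_le_ofReal ?_
    have h0 : 0 ≤ m y ^ (q - 1) := Real.rpow_nonneg (hm0 y) _
    rw [hu, norm_mul, norm_div, Complex.norm_real, Complex.norm_real, RCLike.norm_conj, norm_norm,
      Real.norm_of_nonneg h0]
    exact mul_le_of_le_one_left h0 (div_self_le_one _)
  have hGu : ∀ y, G y * u y = ((‖G y‖ * m y ^ (q - 1) : ℝ) : ℂ) := by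
    intro y
    simp only [hu]
    rcases eq_or_ne (G y) 0 with h0 | h0
    · simp [h0]
    have h1 : (‖G y‖ : ℂ) ≠ 0 := by simpa using h0
    rw [← mul_assoc, ← mul_div_assoc, Complex.mul_conj, Complex.normSq_eq_norm_sq]
    push_cast
    field_simp
  have hui : Integrable u :=
    ⟨hum.aestronglyMeasurable, (lintegral_mono hun).trans_lt hm1.lt_top⟩
  have hup : ∫⁻ y, ‖u y‖ₑ ^ p ≤ ∫⁻ y, ENNReal.ofReal (m y) ^ q := by
    refine lintegral_mono fun y => ?_
    calc ‖u y‖ₑ ^ p ≤ (ENNReal.ofReal (m y) ^ (q - 1)) ^ p := by gcongr; exact hun y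
      _ = _ := by rw [← ENNReal.rpow_mul, hpq.symm.sub_one_mul_conj]
  obtain ⟨hInt, heq⟩ := integral_kernelConv_mul hK hKi hKM hK' hKM' β hKK' hpq hh hhq hum hui
  refine ENNReal.le_mul_of_le_mul_rpow hpq hmq ?_
  calc ∫⁻ y, ENNReal.ofReal (m y) ^ q
      ≤ ∫⁻ y, ENNReal.ofReal (‖G y‖ * m y ^ (q - 1)) := by
        refine lintegral_mono fun y => ?_
        rw [ENNReal.ofReal_rpow_of_nonneg (hm0 y) hq.le]
        refine ENNReal.ofReal_le_ofReal ?_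
        calc m y ^ q = m y * m y ^ (q - 1) := by
              rw [← Real.rpow_one_add' (hm0 y) (by linarith), add_sub_cancel]
          _ ≤ _ := mul_le_mul_of_nonneg_right (hmG y) (Real.rpow_nonneg (hm0 y) _)
    _ = ‖∫ y, G y * u y‖ₑ := by
        have h0 : ∀ y, 0 ≤ ‖G y‖ * m y ^ (q - 1) := fun y =>
          mul_nonneg (norm_nonneg _) (Real.rpow_nonneg (hm0 y) _)
        have hInt' : Integrable fun y => ‖G y‖ * m y ^ (q - 1) :=
          hInt.norm.congr (Filter.Eventually.of_forall fun y => by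
            beta_reduce
            rw [hGu y, Complex.norm_real, Real.norm_of_nonneg (h0 y)])
        simp only [hGu]
        rw [integral_complex_ofReal, ← ofReal_norm, Complex.norm_real,
          Real.norm_of_nonneg (integral_nonneg h0),
          ofReal_integral_eq_lintegral_ofReal hInt' (Filter.Eventually.of_forall h0)]
    _ = ‖∫ z, β (h z) (kernelConv K' u z)‖ₑ := by rw [heq]
    _ ≤ ∫⁻ z, ‖h z‖ₑ * ‖kernelConv K' u z‖ₑ := by
        refine (enorm_integral_le_lintegral_enorm _).trans (lintegral_mono fun z => ?_)
        rw [← ofReal_norm, ← ofReal_norm, ← ofReal_norm, ← ENNReal.ofReal_mul (norm_nonneg _)]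
        exact ENNReal.ofReal_le_ofReal (hβ _ _)
    _ ≤ (∫⁻ z, ‖h z‖ₑ ^ q) ^ (1 / q) * (∫⁻ z, ‖kernelConv K' u z‖ₑ ^ p) ^ (1 / p) :=
        ENNReal.lintegral_mul_le_Lp_mul_Lq volume hpq.symm hh.enorm.aemeasurable
          (stronglyMeasurable_kernelConv hK' hum).enorm.aemeasurable
    _ ≤ _ := by
        gcongr
        exact (hC u hum).trans (mul_le_mul' le_rfl hup)

/-- An `Lᵖ` bound for a convolution operator dualises to an `L^q` bound for its transpose. -/
theorem lintegral_kernelConv_rpow_le_of_dual {K : ℝ → E →L[ℂ] ℂ} {K' : ℝ → ℂ →L[ℂ] E'}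
    (hK : Continuous K) (hKi : Integrable K) {M : ℝ} (hKM : ∀ y, ‖K y‖ ≤ M)
    (hK' : Continuous K') {M' : ℝ} (hKM' : ∀ y, ‖K' y‖ ≤ M') (β : E →L[ℂ] E' →L[ℂ] ℂ)
    (hβ : ∀ v w, ‖β v w‖ ≤ ‖v‖ * ‖w‖)
    (hKK' : ∀ y v c, K y v * c = β v (K' (-y) c)) {p q : ℝ} (hpq : p.HolderConjugate q)
    {C : ENNReal} (hC0 : C ≠ 0) (hC : ∀ u : ℝ → ℂ, StronglyMeasurable u →
      ∫⁻ y, ‖kernelConv K' u y‖ₑ ^ p ≤ C * ∫⁻ y, ‖u y‖ₑ ^ p)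
    {h : ℝ → E} (hh : StronglyMeasurable h) :
    ∫⁻ y, ‖kernelConv K h y‖ₑ ^ q ≤ C ^ (q / p) * ∫⁻ z, ‖h z‖ₑ ^ q := by
  have hp := hpq.pos
  have hq := hpq.symm.pos
  have hq1 : 0 < q - 1 := sub_pos.2 hpq.symm.lt
  by_cases hhq : ∫⁻ z, ‖h z‖ₑ ^ q = ⊤
  · rw [hhq, ENNReal.mul_top]
    · exact le_top
    · simp only [ne_eq, ENNReal.rpow_eq_zero_iff, hC0, false_and, false_or, not_and, not_lt]
      intro _
      positivity
  set G := kernelConv K h with hG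
  have hGm : StronglyMeasurable G := stronglyMeasurable_kernelConv hK hh
  set m : ℕ → ℝ → ℝ := fun N => (Set.Icc (-(N : ℝ)) N).indicator fun y => min ‖G y‖ N with hmdef
  have hm : ∀ N, Measurable (m N) := fun N =>
    (hGm.norm.measurable.min measurable_const).indicator measurableSet_Icc
  have hmfin : ∀ N, ∀ r : ℝ, 0 < r → ∫⁻ y, ENNReal.ofReal (m N y) ^ r ≠ ⊤ := by
    intro N r hr
    have hle : ∀ y, ENNReal.ofReal (m N y) ^ r ≤
        (Set.Icc (-(N : ℝ)) N).indicator (fun _ => ENNReal.ofReal N ^ r) y := by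
      intro y
      by_cases hy : y ∈ Set.Icc (-(N : ℝ)) N
      · simp only [hmdef, Set.indicator_of_mem hy]
        gcongr
        exact min_le_right _ _
      · simp only [hmdef, Set.indicator_of_notMem hy]
        simp [hr]
    refine ((lintegral_mono hle).trans_lt ?_).ne
    rw [lintegral_indicator_const measurableSet_Icc]
    exact ENNReal.mul_lt_top (ENNReal.rpow_lt_top_of_nonneg hr.le ENNReal.ofReal_ne_top)
      measure_Icc_lt_top
  have hbound : ∀ N, ∫⁻ y, ENNReal.ofReal (m N y) ^ q ≤ C ^ (q / p) * ∫⁻ z, ‖h z‖ₑ ^ q := by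
    intro N
    refine lintegral_minorant_rpow_le hK hKi hKM hK' hKM' β hβ hKK' hpq hC hh hhq (hm N)
      (fun y => ?_) (fun y => ?_) (hmfin N _ hq1) (hmfin N _ hq)
    · exact Set.indicator_nonneg (fun y _ => le_min (norm_nonneg _) (Nat.cast_nonneg N)) y
    · exact Set.indicator_le_self' (fun _ _ => norm_nonneg _) y |>.trans' (by
        refine Set.indicator_le_indicator ?_
        exact min_le_left _ _)
  have hlim : ∀ y, ‖G y‖ₑ ^ q =
      Filter.atTop.liminf fun N => ENNReal.ofReal (m N y) ^ q := by
    intro y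
    refine (Filter.Tendsto.liminf_eq (tendsto_const_nhds.congr' ?_)).symm
    filter_upwards [Filter.eventually_ge_atTop ⌈max |y| ‖G y‖⌉₊] with N hN
    have hN' : max |y| ‖G y‖ ≤ N := (Nat.le_ceil _).trans (by exact_mod_cast hN)
    have hy : y ∈ Set.Icc (-(N : ℝ)) N := abs_le.1 ((le_max_left _ _).trans hN')
    simp only [hmdef, Set.indicator_of_mem hy]
    rw [min_eq_left ((le_max_right _ _).trans hN'), ofReal_norm]
  simp only [hlim]
  refine (lintegral_liminf_le fun N => (hm N).ennreal_ofReal.pow_const q).trans ?_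
  exact Filter.liminf_le_of_frequently_le (Filter.Frequently.of_forall hbound)

end Duality

section Synthesis

variable {ι : Type*} [Fintype ι]

/-- The bilinear dot product on `ℂ^ι`. -/
noncomputable def euclideanDot (ι : Type*) [Fintype ι] :
    EuclideanSpace ℂ ι →L[ℂ] EuclideanSpace ℂ ι →L[ℂ] ℂ :=
  ∑ i, (ContinuousLinearMap.mul ℂ ℂ).bilinearComp (EuclideanSpace.proj i) (EuclideanSpace.proj i)

theorem euclideanDot_apply (v w : EuclideanSpace ℂ ι) : euclideanDot ι v w = ∑ i, v i * w i := by
  simp [euclideanDot]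

theorem norm_euclideanDot_le (v w : EuclideanSpace ℂ ι) :
    ‖euclideanDot ι v w‖ ≤ ‖v‖ * ‖w‖ := by
  rw [euclideanDot_apply, EuclideanSpace.norm_eq, EuclideanSpace.norm_eq]
  refine (norm_sum_le _ _).trans ?_
  simp only [norm_mul]
  exact Real.sum_mul_le_sqrt_mul_sqrt _ _ _

theorem norm_euclideanProj_le_one (i : ι) :
    ‖(EuclideanSpace.proj i : EuclideanSpace ℂ ι →L[ℂ] ℂ)‖ ≤ 1 :=
  ContinuousLinearMap.opNorm_le_bound _ zero_le_one fun v => by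
    simpa using PiLp.norm_apply_le v i

variable [DecidableEq ι]

theorem norm_toSpanSingleton_single_le_one (i : ι) :
    ‖ContinuousLinearMap.toSpanSingleton ℂ (EuclideanSpace.single i (1 : ℂ))‖ ≤ 1 := by
  simp [ContinuousLinearMap.norm_toSpanSingleton]

theorem dyadicDilate_fourier_neg (ψ : 𝓢(ℝ, ℂ)) (k : ℤ) (y : ℝ) :
    dyadicDilate (𝓕 ψ) k (-y) = dyadicDilate (𝓕⁻ ψ) k y := by
  rw [dyadicDilate, dyadicDilate, SchwartzMap.fourier_coe, SchwartzMap.fourierInv_coe,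
    Real.fourierInv_eq_fourier_neg, mul_neg]

theorem synthesisKernel_mul_eq_euclideanDot (ψ : 𝓢(ℝ, ℂ)) (κ : ι → ℤ) (y : ℝ)
    (v : EuclideanSpace ℂ ι) (c : ℂ) :
    synthesisKernel (𝓕⁻ ψ) κ y v * c = euclideanDot ι v (analysisKernel (𝓕 ψ) κ (-y) c) := by
  rw [synthesisKernel_apply, euclideanDot_apply, Finset.sum_mul]
  refine Finset.sum_congr rfl fun i _ => ?_
  rw [analysisKernel_apply, dyadicDilate_fourier_neg]
  ring

theorem exists_enorm_sq_le_min_of_annulus (ψ : 𝓢(ℝ, ℂ))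
    (hsupp : ∀ t, ψ t ≠ 0 → 1 / 2 ≤ |t| ∧ |t| ≤ 5 / 2) :
    ∃ A : ENNReal, A ≠ ⊤ ∧
      ∀ ξ, ‖𝓕 (𝓕 ψ) ξ‖ₑ ^ (2 : ℝ) ≤ A * ENNReal.ofReal (min |ξ| |ξ|⁻¹) := by
  obtain ⟨C, hC⟩ := ψ.decay 0 0
  refine ⟨ENNReal.ofReal C ^ (2 : ℝ) * ENNReal.ofReal (5 / 2), by finiteness, fun ξ => ?_⟩
  have hψ : 𝓕 (𝓕 ψ) ξ = ψ (-ξ) := by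
    have h : 𝓕⁻ (𝓕 ψ) (-ξ) = ψ (-ξ) := by rw [FourierTransform.fourierInv_fourier_eq]
    rw [← h, SchwartzMap.fourierInv_coe, Real.fourierInv_eq_fourier_neg, neg_neg,
      SchwartzMap.fourier_coe]
  rw [hψ]
  by_cases h0 : ψ (-ξ) = 0
  · simp [h0]
  obtain ⟨h1, h2⟩ := hsupp _ h0
  rw [abs_neg] at h1 h2
  have hmin : 2 / 5 ≤ min |ξ| |ξ|⁻¹ := by
    refine le_min (by linarith) ?_
    rw [le_inv_comm₀ (by norm_num) (by linarith)]
    norm_num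
    exact h2
  have hb : ‖ψ (-ξ)‖ ≤ C := by simpa using hC.2 (-ξ)
  rw [mul_assoc, ← ENNReal.ofReal_mul (by norm_num)]
  calc ‖ψ (-ξ)‖ₑ ^ (2 : ℝ) ≤ ENNReal.ofReal C ^ (2 : ℝ) * 1 := by
        rw [mul_one, ← ofReal_norm]
        gcongr
    _ ≤ _ := by
        gcongr
        rw [ENNReal.one_le_ofReal]
        linarith

/-- Uniform `L^q` bounds for the Littlewood–Paley synthesis operator on the line. -/
theorem exists_synthesis_bound (ψ : 𝓢(ℝ, ℂ))
    (hsupp : ∀ t, ψ t ≠ 0 → 1 / 2 ≤ |t| ∧ |t| ≤ 5 / 2) {q : ℝ} (hq : 1 < q) :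
    ∃ C : ENNReal, C ≠ ⊤ ∧ ∀ (ι : Type) [Fintype ι] (κ : ι → ℤ),
      Function.Injective κ → ∀ h : ℝ → EuclideanSpace ℂ ι, StronglyMeasurable h →
        ∫⁻ y, ‖kernelConv (synthesisKernel (𝓕⁻ ψ) κ) h y‖ₑ ^ q ≤ C * ∫⁻ y, ‖h y‖ₑ ^ q := by
  classical
  obtain ⟨A, hA, hψ⟩ := exists_enorm_sq_le_min_of_annulus ψ hsupp
  have hds := dyadicSumConst_ne_top
  set A₂ := A * dyadicSumConst + 1 with hA₂
  have hA₂fin : A₂ ≠ ⊤ := by finiteness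
  have hA₂0 : A₂ ≠ 0 := by simp [hA₂]
  have dual : ∀ (ι : Type) [Fintype ι] (κ : ι → ℤ) {p q : ℝ}, p.HolderConjugate q →
      ∀ C : ENNReal, C ≠ 0 → (∀ u : ℝ → ℂ, StronglyMeasurable u →
        ∫⁻ y, ‖kernelConv (analysisKernel (𝓕 ψ) κ) u y‖ₑ ^ p ≤ C * ∫⁻ y, ‖u y‖ₑ ^ p) →
      ∀ h : ℝ → EuclideanSpace ℂ ι, StronglyMeasurable h →
        ∫⁻ y, ‖kernelConv (synthesisKernel (𝓕⁻ ψ) κ) h y‖ₑ ^ q ≤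
          C ^ (q / p) * ∫⁻ y, ‖h y‖ₑ ^ q := by
    intro ι _ κ p q hpq C hC0 hC h hh
    obtain ⟨M, hM⟩ := norm_dyadicKernel_le (𝓕⁻ ψ) κ
      fun i => (EuclideanSpace.proj i : EuclideanSpace ℂ ι →L[ℂ] ℂ)
    obtain ⟨M', hM'⟩ := norm_dyadicKernel_le (𝓕 ψ) κ
      fun i => ContinuousLinearMap.toSpanSingleton ℂ (EuclideanSpace.single i (1 : ℂ))
    exact lintegral_kernelConv_rpow_le_of_dual (K := synthesisKernel (𝓕⁻ ψ) κ)
      (K' := analysisKernel (𝓕 ψ) κ) (continuous_dyadicKernel _ _ _)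
      (integrable_dyadicKernel _ _ _) hM (continuous_dyadicKernel _ _ _) hM' (euclideanDot ι)
      norm_euclideanDot_le (synthesisKernel_mul_eq_euclideanDot ψ κ) hpq hC0 hC hh
  rcases lt_trichotomy q 2 with hq2 | rfl | hq2
  · have hB := translationConst_ne_top (𝓕⁻ ψ)
    refine ⟨calderonZygmundConst q (A₂ ^ ((2 : ℝ) / 2)) (translationConst (𝓕⁻ ψ) * dyadicSumConst),
      calderonZygmundConst_ne_top q (by linarith) (by simpa using hA₂fin) (by finiteness), ?_⟩
    intro ι _ κ hκ h hh
    obtain ⟨M, hM⟩ := norm_dyadicKernel_le (𝓕⁻ ψ) κ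
      fun i => (EuclideanSpace.proj i : EuclideanSpace ℂ ι →L[ℂ] ℂ)
    exact lintegral_kernelConv_rpow_le (K := synthesisKernel (𝓕⁻ ψ) κ)
      (continuous_dyadicKernel _ _ _) (integrable_dyadicKernel _ _ _) hM
      (dual ι κ Real.HolderConjugate.two_two A₂ hA₂0 fun u hu =>
        lintegral_analysis_sq_le (𝓕 ψ) hκ hA hψ hu)
      (setLIntegral_dyadicKernel_sub_le _ hκ norm_euclideanProj_le_one) hq hq2 hh
  · refine ⟨A₂ ^ ((2 : ℝ) / 2), by simpa using hA₂fin, fun ι _ κ hκ => ?_⟩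
    exact dual ι κ Real.HolderConjugate.two_two A₂ hA₂0 fun u hu =>
      lintegral_analysis_sq_le (𝓕 ψ) hκ hA hψ hu
  · have hB := translationConst_ne_top (𝓕 ψ)
    have hpq : (Real.conjExponent q).HolderConjugate q :=
      (Real.HolderConjugate.conjExponent hq).symm
    have hp2 : Real.conjExponent q < 2 := by
      rw [Real.conjExponent, div_lt_iff₀ (by linarith)]
      linarith
    set p := Real.conjExponent q with hp
    have hp1 : 1 < p := hpq.lt
    set B := translationConst (𝓕 ψ) * dyadicSumConst with hBdef
    have hC0 := calderonZygmundConst_ne_zero A₂ B hp1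
    have hCtop : calderonZygmundConst p A₂ B ≠ ⊤ :=
      calderonZygmundConst_ne_top p (by linarith) hA₂fin (by finiteness)
    refine ⟨calderonZygmundConst p A₂ B ^ (q / p),
      ENNReal.rpow_ne_top_of_nonneg (by positivity) hCtop, fun ι _ κ hκ => ?_⟩
    refine dual ι κ hpq _ hC0 fun u hu => ?_
    obtain ⟨M', hM'⟩ := norm_dyadicKernel_le (𝓕 ψ) κ
      fun i => ContinuousLinearMap.toSpanSingleton ℂ (EuclideanSpace.single i (1 : ℂ))
    exact lintegral_kernelConv_rpow_le (K := analysisKernel (𝓕 ψ) κ)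
      (continuous_dyadicKernel _ _ _) (integrable_dyadicKernel _ _ _) hM'
      (fun u hu => lintegral_analysis_sq_le (𝓕 ψ) hκ hA hψ hu)
      (setLIntegral_dyadicKernel_sub_le _ hκ norm_toSpanSingleton_single_le_one) hp1 hp2 hu

end Synthesis

section Foliation

theorem kernelConv_synthesisKernel_eq_sum {ι : Type*} [Fintype ι] (Φ : 𝓢(ℝ, ℂ)) (κ : ι → ℤ)
    {h : ℝ → EuclideanSpace ℂ ι} (hh : StronglyMeasurable h) {q : ℝ} (hq : 1 < q)
    (hhq : ∫⁻ z, ‖h z‖ₑ ^ q ≠ ⊤) (y : ℝ) :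
    kernelConv (synthesisKernel Φ κ) h y = ∑ i, ∫ z, dyadicDilate Φ (κ i) (y - z) * h z i := by
  classical
  rw [kernelConv, ← integral_finsetSum]
  · simp only [synthesisKernel_apply]
  intro i _
  obtain ⟨M, hM⟩ := norm_dyadicKernel_le Φ κ
    fun i => (EuclideanSpace.proj i : EuclideanSpace ℂ ι →L[ℂ] ℂ)
  let P : EuclideanSpace ℂ ι →L[ℂ] EuclideanSpace ℂ ι :=
    (ContinuousLinearMap.toSpanSingleton ℂ (EuclideanSpace.single i (1 : ℂ))).comp
      (EuclideanSpace.proj i)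
  have hP : ∀ v j, P v j = if j = i then v i else 0 := by
    intro v j
    simp [P]
  have hle : ∫⁻ z, ‖P (h z)‖ₑ ^ q ≠ ⊤ := by
    refine ((lintegral_mono fun z => ?_).trans_lt hhq.lt_top).ne
    gcongr
    rw [← ofReal_norm, ← ofReal_norm]
    refine ENNReal.ofReal_le_ofReal ?_
    calc ‖P (h z)‖ = ‖h z i‖ := by simp [P, norm_smul]
      _ ≤ ‖h z‖ := PiLp.norm_apply_le _ _
  have hInt := integrable_kernel_apply_of_holder (K := synthesisKernel Φ κ)
    (continuous_dyadicKernel _ _ _) (integrable_dyadicKernel _ _ _) hM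
    (P.continuous.comp_stronglyMeasurable hh) (Real.HolderConjugate.conjExponent hq).symm hle y
  simpa [synthesisKernel_apply, hP] using hInt

theorem eq_dyadicDilate_fourierInv (ψ : 𝓢(ℝ, ℂ)) (k : ℤ) (y : ℝ) :
    ∫ t : ℝ, ψ ((2 : ℝ) ^ (-k) * t) *
        Complex.exp (2 * (Real.pi : ℂ) * Complex.I * (t : ℂ) * (y : ℂ)) =
      dyadicDilate (𝓕⁻ ψ) k y := by
  have hk : (0 : ℝ) < (2 : ℝ) ^ k := by positivity
  have h := Measure.integral_comp_mul_left (fun t : ℝ => ψ t * Complex.exp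
    (2 * (Real.pi : ℂ) * Complex.I * (((2 : ℝ) ^ k * t : ℝ) : ℂ) * (y : ℂ))) ((2 : ℝ) ^ (-k))
  rw [zpow_neg, inv_inv, abs_of_pos hk] at h
  simp only [mul_inv_cancel_left₀ hk.ne'] at h
  rw [dyadicDilate, SchwartzMap.fourierInv_coe, Real.fourierInv_eq', zpow_neg, h]
  congr 1
  refine integral_congr_ae (Filter.Eventually.of_forall fun t => ?_)
  simp only [smul_eq_mul]
  rw [mul_comm]
  congr 2
  simp
  ring

theorem lintegral_comp_le_of_antilipschitz {G : ℝ → ℝ} (hGm : Measurable G) {a : NNReal}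
    (hG : AntilipschitzWith a G) {H : ℝ → ENNReal} (hH : Measurable H) :
    ∫⁻ x, H (G x) ≤ a * ∫⁻ x, H x := by
  rw [← lintegral_map hH hGm, ← smul_eq_mul, ← lintegral_smul_measure]
  refine lintegral_mono' (Measure.le_iff.2 fun s hs => ?_) le_rfl
  rw [Measure.map_apply hGm hs, Measure.smul_apply, smul_eq_mul]
  have := hG.hausdorffMeasure_preimage_le zero_le_one s
  simpa [hausdorffMeasure_real] using this

theorem antilipschitzWith_of_foliation {a0 : ℝ} (ha0 : 1 ≤ a0) {g : ℝ × ℝ → ℝ}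
    (hg : ∀ x x' y : ℝ, x < x' →
      (x' - x) / a0 ≤ g (x', y) - g (x, y) ∧ g (x', y) - g (x, y) ≤ a0 * (x' - x)) (y : ℝ) :
    AntilipschitzWith a0.toNNReal fun x => g (x, y) := by
  have ha : 0 < a0 := zero_lt_one.trans_le ha0
  have key : ∀ x x', x < x' → |x' - x| ≤ a0 * |g (x', y) - g (x, y)| := by
    intro x x' hx
    have h := (hg x x' y hx).1
    rw [div_le_iff₀' ha] at h
    rw [abs_of_pos (sub_pos.2 hx)]
    exact h.trans (mul_le_mul_of_nonneg_left (le_abs_self _) ha.le)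
  refine AntilipschitzWith.of_le_mul_dist fun x x' => ?_
  rw [Real.coe_toNNReal _ ha.le, Real.dist_eq, Real.dist_eq]
  rcases lt_trichotomy x x' with h | rfl | h
  · rw [abs_sub_comm, abs_sub_comm (g (x, y))]
    exact key x x' h
  · simp
  · exact key x' x h

theorem continuous_of_foliation {a0 b0 : ℝ} (ha0 : 1 ≤ a0) (hb0 : 0 < b0) {g : ℝ × ℝ → ℝ}
    (hg : ∀ x x' y : ℝ, x < x' →
      (x' - x) / a0 ≤ g (x', y) - g (x, y) ∧ g (x', y) - g (x, y) ≤ a0 * (x' - x))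
    (hg' : ∀ x y y' : ℝ, |g (x, y) - g (x, y')| ≤ b0 * |y - y'|) : Continuous g := by
  have ha : 0 < a0 := zero_lt_one.trans_le ha0
  have key : ∀ x x' y, x < x' → |g (x', y) - g (x, y)| ≤ a0 * |x' - x| := by
    intro x x' y hx
    have h := hg x x' y hx
    have h0 : 0 ≤ (x' - x) / a0 := div_nonneg (sub_pos.2 hx).le ha.le
    rw [abs_of_pos (sub_pos.2 hx), abs_of_nonneg (h0.trans h.1)]
    exact h.2
  have key' : ∀ x x' y, |g (x', y) - g (x, y)| ≤ a0 * |x' - x| := by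
    intro x x' y
    rcases lt_trichotomy x x' with h | rfl | h
    · exact key x x' y h
    · simp
    · rw [abs_sub_comm, abs_sub_comm x']
      exact key x' x y h
  refine LipschitzWith.continuous (K := (a0 + b0).toNNReal) (LipschitzWith.of_dist_le_mul ?_)
  rintro ⟨x, y⟩ ⟨x', y'⟩
  rw [Real.coe_toNNReal _ (by linarith), Real.dist_eq]
  have h1 : |x - x'| ≤ dist (x, y) (x', y') := le_max_left _ _
  have h2 : |y - y'| ≤ dist (x, y) (x', y') := le_max_right _ _
  calc |g (x, y) - g (x', y')| ≤ |g (x, y) - g (x', y)| + |g (x', y) - g (x', y')| :=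
        abs_sub_le _ _ _
    _ ≤ a0 * |x - x'| + b0 * |y - y'| := add_le_add (key' _ _ _) (hg' _ _ _)
    _ ≤ a0 * dist (x, y) (x', y') + b0 * dist (x, y) (x', y') := by gcongr
    _ = _ := by ring

/-- The shear `(x, y) ↦ (g(x, y), y)` distorts integrals by at most the antilipschitz constant
of the horizontal sections of `g`. -/
theorem lintegral_foliation_le {g : ℝ × ℝ → ℝ} (hgc : Continuous g) {a : NNReal}
    (hg : ∀ y, AntilipschitzWith a fun x => g (x, y)) {H : ℝ × ℝ → ENNReal} (hH : Measurable H) :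
    ∫⁻ x, ∫⁻ y, H (g (x, y), y) ≤ a * ∫⁻ r, H r := by
  have hgm := hgc.measurable
  rw [lintegral_lintegral_swap (by
      exact (hH.comp (hgm.prodMk measurable_snd)).aemeasurable),
    Measure.volume_eq_prod, lintegral_prod_symm _ hH.aemeasurable,
    ← lintegral_const_mul _ hH.lintegral_prod_left']
  refine lintegral_mono fun y => ?_
  exact lintegral_comp_le_of_antilipschitz (hgm.comp (measurable_id.prodMk measurable_const)) (hg y)
    (hH.comp (measurable_id.prodMk measurable_const))

theorem lintegral_synthesis_foliation_le (Φ : 𝓢(ℝ, ℂ)) {q : ℝ} (hq : 1 < q) {ι : Type}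
    [Fintype ι] {κ : ι → ℤ} {C : ENNReal}
    (hC : ∀ h : ℝ → EuclideanSpace ℂ ι, StronglyMeasurable h →
      ∫⁻ y, ‖kernelConv (synthesisKernel Φ κ) h y‖ₑ ^ q ≤ C * ∫⁻ y, ‖h y‖ₑ ^ q)
    {g : ℝ × ℝ → ℝ} (hgc : Continuous g) {a : NNReal}
    (hg : ∀ y, AntilipschitzWith a fun x => g (x, y)) {f : ℝ × ℝ → EuclideanSpace ℂ ι}
    (hf : Measurable f) (hfq : ∫⁻ r, ‖f r‖ₑ ^ q ≠ ⊤) :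
    ∫⁻ r : ℝ × ℝ, ‖∑ i, ∫ z, dyadicDilate Φ (κ i) (r.2 - z) * f (g (r.1, z), z) i‖ₑ ^ q ≤
      C * (a * ∫⁻ r, ‖f r‖ₑ ^ q) := by
  have hH : Measurable fun r => ‖f r‖ₑ ^ q := hf.enorm.pow_const q
  have hshear : Measurable fun r : ℝ × ℝ => ‖f (g r, r.2)‖ₑ ^ q :=
    hH.comp (hgc.measurable.prodMk measurable_snd)
  have hle := lintegral_foliation_le hgc hg hH
  have hfin : ∀ᵐ x, ∫⁻ y, ‖f (g (x, y), y)‖ₑ ^ q < ⊤ :=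
    ae_lt_top hshear.lintegral_prod_right' (hle.trans_lt
      (ENNReal.mul_lt_top ENNReal.coe_lt_top hfq.lt_top)).ne
  rw [Measure.volume_eq_prod]
  refine (lintegral_prod_le _).trans ?_
  calc _ ≤ ∫⁻ x, C * ∫⁻ y, ‖f (g (x, y), y)‖ₑ ^ q := by
        refine lintegral_mono_ae ?_
        filter_upwards [hfin] with x hx
        have hh : StronglyMeasurable fun y => f (g (x, y), y) :=
          (hf.comp ((hgc.measurable.comp (measurable_const.prodMk measurable_id)).prodMk
            measurable_id)).stronglyMeasurable
        refine le_trans (le_of_eq ?_) (hC _ hh)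
        refine lintegral_congr fun y => ?_
        rw [kernelConv_synthesisKernel_eq_sum Φ κ hh hq hx.ne]
    _ = C * ∫⁻ x, ∫⁻ y, ‖f (g (x, y), y)‖ₑ ^ q :=
        lintegral_const_mul _ hshear.lintegral_prod_right'
    _ ≤ _ := mul_le_mul' le_rfl hle

end Foliation

/-- Synthesis (dual) estimate (3.12) for the adapted Littlewood–Paley projections along the
Lipschitz curves of the foliation `(x,y) ↦ (g(x,y), y)`: the `L^q` norm of the sum
`Σ_k P̃_k F_k` is controlled by the `L^q` norm of the square function of the family `(f_k)`. -/
theorem stmt7 (q : ℝ) (hq : 1 < q) (a0 : ℝ) (ha0 : 1 ≤ a0) (ψ0 : SchwartzMap ℝ ℝ)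
    (hsupp : ∀ t : ℝ, ψ0 t ≠ 0 → 1 / 2 ≤ |t| ∧ |t| ≤ 5 / 2)
    (hsum : ∀ t : ℝ, t ≠ 0 → ∑' k : ℤ, ψ0 ((2 : ℝ) ^ (-k) * t) = 1)
    (φ : ℤ → ℝ → ℂ)
    (hφ : ∀ (k : ℤ) (y : ℝ), φ k y =
      ∫ t : ℝ, (ψ0 ((2 : ℝ) ^ (-k) * t) : ℂ) *
        Complex.exp (2 * (Real.pi : ℂ) * Complex.I * (t : ℂ) * (y : ℂ))) :
    ∃ C : ℝ, 0 < C ∧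
    ∀ b0 : ℝ, 0 < b0 → ∀ g : ℝ × ℝ → ℝ,
    (∀ x x' y : ℝ, x < x' →
      (x' - x) / a0 ≤ g (x', y) - g (x, y) ∧ g (x', y) - g (x, y) ≤ a0 * (x' - x)) →
    (∀ x y y' : ℝ, |g (x, y) - g (x, y')| ≤ b0 * |y - y'|) →
    ∀ f : ℤ → ℝ × ℝ → ℂ, (Function.support f).Finite → (∀ k : ℤ, Measurable (f k)) →
    (∫⁻ r : ℝ × ℝ, (∑' k : ℤ, (‖f k r‖₊ : ENNReal) ^ 2) ^ (q / 2)) ^ (1 / q) < ⊤ →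
      eLpNorm (fun r : ℝ × ℝ =>
          ∑' k : ℤ, ∫ z : ℝ, φ k (r.2 - z) * f k (g (r.1, z), z))
        (ENNReal.ofReal q) volume ≤
        ENNReal.ofReal C *
          (∫⁻ r : ℝ × ℝ, (∑' k : ℤ, (‖f k r‖₊ : ENNReal) ^ 2) ^ (q / 2)) ^ (1 / q) := by
  classical
  let ψ : 𝓢(ℝ, ℂ) := SchwartzMap.postcompCLM Complex.ofRealCLM ψ0
  have hψ : ∀ t, ψ t = (ψ0 t : ℂ) := fun t => rfl
  obtain ⟨C, hCtop, hC⟩ := exists_synthesis_bound ψ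
    (fun t ht => hsupp t fun h0 => ht (by rw [hψ, h0, Complex.ofReal_zero])) hq
  have hφ' : ∀ k y, φ k y = dyadicDilate (𝓕⁻ ψ) k y := fun k y => by
    rw [hφ, ← eq_dyadicDilate_fourierInv]
    simp only [hψ]
  have hq0 : 0 < q := by linarith
  set D : ENNReal := (C * a0.toNNReal) ^ (1 / q) with hD
  have hDtop : D ≠ ⊤ := ENNReal.rpow_ne_top_of_nonneg (by positivity)
    (ENNReal.mul_ne_top hCtop ENNReal.coe_ne_top)
  refine ⟨D.toReal + 1, by positivity, fun b0 hb0 g hg hg' f hfs hfm hfin => ?_⟩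
  let s := hfs.toFinset
  have hs : ∀ k, k ∉ s → f k = 0 := fun k hk => by simpa [s] using hk
  let F : ℝ × ℝ → EuclideanSpace ℂ s := fun r => WithLp.toLp 2 fun i => f i r
  have hF : Measurable F := by
    refine (WithLp.measurable_toLp 2 _).comp (measurable_pi_lambda _ fun i => hfm i)
  have hFn : ∀ r, ‖F r‖ₑ ^ q = (∑' k : ℤ, (‖f k r‖₊ : ENNReal) ^ 2) ^ (q / 2) := by
    intro r
    rw [tsum_eq_sum (s := s) fun k hk => by simp [hs k hk], ← Finset.sum_coe_sort]
    have h2 : ‖F r‖ₑ ^ (2 : ℝ) = ∑ i : s, (‖f i r‖₊ : ENNReal) ^ 2 := by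
      rw [EuclideanSpace.enorm_rpow_two_eq_sum]
      refine Finset.sum_congr rfl fun i _ => ?_
      rw [← ENNReal.rpow_natCast]
      norm_num [F, enorm_eq_nnnorm]
    rw [← h2, ← ENNReal.rpow_mul]
    congr 1
    ring
  simp only [← hFn] at hfin ⊢
  have hFfin : ∫⁻ r, ‖F r‖ₑ ^ q ≠ ⊤ := by
    contrapose! hfin
    rw [hfin, ENNReal.top_rpow_of_pos (by positivity)]
  have hmain := lintegral_synthesis_foliation_le (𝓕⁻ ψ) hq
    (hC s (fun i => (i : ℤ)) Subtype.val_injective) (continuous_of_foliation ha0 hb0 hg hg')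
    (antilipschitzWith_of_foliation ha0 hg) hF hFfin
  have hsumeq : ∀ r : ℝ × ℝ, ∑' k : ℤ, ∫ z : ℝ, φ k (r.2 - z) * f k (g (r.1, z), z) =
      ∑ i : s, ∫ z, dyadicDilate (𝓕⁻ ψ) i (r.2 - z) * F (g (r.1, z), z) i := by
    intro r
    rw [tsum_eq_sum (s := s) fun k hk => by simp [hs k hk], ← Finset.sum_coe_sort]
    simp only [hφ', F]
  simp only [hsumeq]
  rw [eLpNorm_eq_lintegral_rpow_enorm_toReal (by simpa using hq0) ENNReal.ofReal_ne_top,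
    ENNReal.toReal_ofReal hq0.le]
  calc _ ≤ (C * (a0.toNNReal * ∫⁻ r, ‖F r‖ₑ ^ q)) ^ (1 / q) := by gcongr
    _ = D * (∫⁻ r, ‖F r‖ₑ ^ q) ^ (1 / q) := by
        rw [← mul_assoc, ENNReal.mul_rpow_of_nonneg _ _ (by positivity)]
    _ ≤ _ := by
        gcongr
        rw [← ENNReal.ofReal_toReal hDtop]
        exact ENNReal.ofReal_le_ofReal (by simp [ENNReal.toReal_ofReal])
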